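/- Let K be the distribution function of a probability measure on [0,1], let (X_i)_{i∈ℕ} be identically distributed real random variables with common distribution function F ∈ 𝓕_K satisfying F(x) ∈ (0,1) for all x ∈ ℝ, let 0 ≤ β′ < γ ≤ 1, and assume conditions (a) and (b): (a) for each x ∈ (0,1) there exist L(x) > 0 and δ(x) > 0 with |K(y) − K(x)| ≤ L(x)·|y − x| for all y ∈ (0,1) with |y − x| ≤ δ(x), where L(x) ≤ C′·x^{−β′}(1−x)^{−β′} for a constant C′ > 0; (b) ∫_{−∞}^0 F(x)^{γ−β′} dx + ∫_0^{∞} (1−F(x))^{γ−β′} dx < ∞. Suppose (X_i) is α-mixing with coefficients (α(n))_{n≥1}, extended by α(t) := α(⌊t⌋) for t ≥ 1 and α(t) := 1/4 for t ∈ [0,1), that ∫_{−∞}^{∞} φ_{γ,F} dF < ∞, and that ∫_0^1 log(1 + α^→(s/2))·Ḡ^→(s) ds < ∞, where G is the distribution function of φ_{γ,F}(X_1) and Ḡ := 1 − G. Then |𝓛_K(F̂_n) − 𝓛_K(F)| → 0 ℙ-almost surely as n → ∞. -/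

import Mathlib

open MeasureTheory Filter Set

/-- The empirical distribution function of `X 0, …, X (n-1)` evaluated at `x`. -/
noncomputable def empDF {Ω : Type*} (X : ℕ → Ω → ℝ) (n : ℕ) (ω : Ω) (x : ℝ) : ℝ :=
  (((Finset.range n).filter fun i => X i ω ≤ x).card : ℝ) / n

/-- Distribution function of a random variable. -/
noncomputable def distFun {Ω : Type*} [MeasurableSpace Ω] (P : Measure Ω) (Y : Ω → ℝ) (x : ℝ) : ℝ :=
  (P {ω | Y ω ≤ x}).toReal

/-- α-mixing coefficients of a sequence of real random variables. -/
noncomputable def alphaCoef {Ω : Type*} [MeasurableSpace Ω] (P : Measure Ω)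
    (X : ℕ → Ω → ℝ) (n : ℕ) : ℝ :=
  sSup { c : ℝ | ∃ (k : ℕ) (A B : Set Ω),
    MeasurableSet[⨆ i ∈ {i : ℕ | i ≤ k}, MeasurableSpace.comap (X i) Real.measurableSpace] A ∧
    MeasurableSet[⨆ i ∈ {i : ℕ | k + n ≤ i}, MeasurableSpace.comap (X i) Real.measurableSpace] B ∧
    c = |(P (A ∩ B)).toReal - (P A).toReal * (P B).toReal| }

/-- Càdlàg extension of mixing coefficients, equal to `1/4` on `[0,1)`
and to `α ⌊t⌋` for `t ≥ 1`. -/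
noncomputable def alphaExt (α : ℕ → ℝ) (t : ℝ) : ℝ :=
  if t < 1 then 1 / 4 else α ⌊t⌋₊

/-- Right-continuous inverse of a nonincreasing function on `[0,∞)`, with `sup ∅ = 0`. -/
noncomputable def rcInv (h : ℝ → ℝ) (y : ℝ) : ℝ :=
  sSup { x : ℝ | 0 ≤ x ∧ y < h x }

/-- `K` is the distribution function of a probability measure on `[0,1]`. -/
def IsDFon01 (K : ℝ → ℝ) : Prop :=
  ∃ μ : Measure ℝ, IsProbabilityMeasure μ ∧ μ (Set.Icc (0 : ℝ) 1)ᶜ = 0 ∧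
    ∀ x, K x = (μ (Set.Iic x)).toReal

/-- The L-functional `𝓛_K(F) = ∫ x dK(F(x))`, written in the form
`∫_0^∞ (1 - K(F(x))) dx - ∫_{-∞}^0 K(F(x)) dx`, valid for `F ∈ 𝓕_K`. -/
noncomputable def LFunc (K F : ℝ → ℝ) : ℝ :=
  (∫ x in Set.Ioi (0 : ℝ), (1 - K (F x))) - ∫ x in Set.Iic (0 : ℝ), K (F x)

/-- `F ∈ 𝓕_K`, i.e. `∫ |x| dK(F(x)) < ∞`, expressed via the tail representation. -/
def MemFK (K F : ℝ → ℝ) : Prop :=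
  IntegrableOn (fun x => K (F x)) (Set.Iic (0 : ℝ)) ∧
    IntegrableOn (fun x => 1 - K (F x)) (Set.Ioi (0 : ℝ))

/-- The weight function `φ_{γ,F}(x) = F(x)^{-γ}` for `x < 0` and `(1-F(x))^{-γ}` for `x ≥ 0`. -/
noncomputable def phiW (γ : ℝ) (F : ℝ → ℝ) (x : ℝ) : ℝ :=
  if x < 0 then F x ^ (-γ) else (1 - F x) ^ (-γ)


section CovLemmas

variable {Ω : Type*} {m0 : MeasurableSpace Ω}

lemma integrable_of_abs_le (P : Measure Ω) [IsProbabilityMeasure P] {f : Ω → ℝ}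
    (hf : Measurable f) (C : ℝ) (h : ∀ ω, |f ω| ≤ C) : Integrable f P :=
  Integrable.of_bound hf.aestronglyMeasurable C (Eventually.of_forall fun ω => by
    simpa using h ω)

/-- A bounded weight is dominated by an indicator. -/
lemma exists_set_integral_le (P : Measure Ω) [IsProbabilityMeasure P] (m : MeasurableSpace Ω)
    (hm : m ≤ m0) (W : Ω → ℝ) (hW : Integrable W P) :
    ∃ A, MeasurableSet[m] A ∧ ∀ U : Ω → ℝ, Measurable[m] U → (∀ ω, 0 ≤ U ω) → (∀ ω, U ω ≤ 1) →
      ∫ ω, U ω * W ω ∂P ≤ ∫ ω in A, W ω ∂P := by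
  have hsm : StronglyMeasurable[m] (P[W|m]) := stronglyMeasurable_condExp
  have hA : MeasurableSet[m] {ω | 0 < (P[W|m]) ω} := by
    exact measurableSet_lt (measurable_const) hsm.measurable
  refine ⟨{ω | 0 < (P[W|m]) ω}, hA, ?_⟩
  intro U hU hU0 hU1
  have hUW : Integrable (U * W) P := by
    refine hW.bdd_mul (c := 1) (hU.mono hm le_rfl).aestronglyMeasurable ?_
    exact Eventually.of_forall fun ω => by
      rw [Real.norm_eq_abs, abs_of_nonneg (hU0 ω)]; exact hU1 ω
  have hUW' : Integrable (fun ω => U ω * (P[W|m]) ω) P := by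
    refine integrable_condExp.bdd_mul (c := 1) (hU.mono hm le_rfl).aestronglyMeasurable ?_
    exact Eventually.of_forall fun ω => by
      rw [Real.norm_eq_abs, abs_of_nonneg (hU0 ω)]; exact hU1 ω
  have e1 : ∫ ω, U ω * W ω ∂P = ∫ ω, U ω * (P[W|m]) ω ∂P := by
    have h1 := condExp_mul_of_stronglyMeasurable_left (μ := P) hU.stronglyMeasurable hUW hW
    have h2 := integral_condExp (μ := P) (f := U * W) hm
    calc ∫ ω, U ω * W ω ∂P = ∫ ω, (P[U * W|m]) ω ∂P := h2.symm
      _ = _ := integral_congr_ae h1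
  rw [e1, ← setIntegral_condExp hm hW hA, ← integral_indicator (hm _ hA)]
  refine integral_mono hUW' (integrable_condExp.indicator (hm _ hA)) ?_
  intro ω
  by_cases h : 0 < (P[W|m]) ω
  · have : ω ∈ {ω | 0 < (P[W|m]) ω} := h
    simp only [Set.indicator_of_mem this]
    have := hU1 ω; nlinarith
  · have h' : ω ∉ {ω | 0 < (P[W|m]) ω} := h
    simp only [Set.indicator_of_notMem h']
    have := hU0 ω; push Not at h; nlinarith

lemma cov01 (P : Measure Ω) [IsProbabilityMeasure P] (m1 m2 : MeasurableSpace Ω)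
    (h1 : m1 ≤ m0) (h2 : m2 ≤ m0) (a : ℝ)
    (ha : ∀ A B, MeasurableSet[m1] A → MeasurableSet[m2] B →
      |P.real (A ∩ B) - P.real A * P.real B| ≤ a)
    (U V : Ω → ℝ) (hU : Measurable[m1] U) (hV : Measurable[m2] V)
    (hU0 : ∀ ω, 0 ≤ U ω) (hU1 : ∀ ω, U ω ≤ 1) (hV0 : ∀ ω, 0 ≤ V ω) (hV1 : ∀ ω, V ω ≤ 1) :
    ∫ ω, U ω * V ω ∂P - (∫ ω, U ω ∂P) * ∫ ω, V ω ∂P ≤ a := by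
  have hUm := hU.mono h1 le_rfl
  have hVm := hV.mono h2 le_rfl
  have iU : Integrable U P := integrable_of_abs_le P hUm 1 fun ω => by
    rw [abs_of_nonneg (hU0 ω)]; exact hU1 ω
  have iV : Integrable V P := integrable_of_abs_le P hVm 1 fun ω => by
    rw [abs_of_nonneg (hV0 ω)]; exact hV1 ω
  have iUV : Integrable (fun ω => U ω * V ω) P :=
    integrable_of_abs_le P (hUm.mul hVm) 1 fun ω => by
      rw [abs_of_nonneg (mul_nonneg (hU0 ω) (hV0 ω))]
      exact mul_le_one₀ (hU1 ω) (hV0 ω) (hV1 ω)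
  obtain ⟨A, hA, hA'⟩ := exists_set_integral_le P m1 h1 (fun ω => V ω - ∫ ω, V ω ∂P)
    (iV.sub (integrable_const _))
  have s1 := hA' U hU hU0 hU1
  have hAm := h1 _ hA
  obtain ⟨B, hB, hB'⟩ := exists_set_integral_le P m2 h2
    (fun ω => A.indicator (fun _ => (1:ℝ)) ω - P.real A)
    (((integrable_const (1:ℝ)).indicator hAm).sub (integrable_const _))
  have s2 := hB' V hV hV0 hV1
  have hBm := h2 _ hB
  have e1 : ∫ ω, U ω * (V ω - ∫ ω, V ω ∂P) ∂P
      = ∫ ω, U ω * V ω ∂P - (∫ ω, U ω ∂P) * ∫ ω, V ω ∂P := by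
    simp_rw [mul_sub]
    rw [integral_sub iUV (iU.mul_const _), integral_mul_const]
  have e2 : ∫ ω in A, (V ω - ∫ ω, V ω ∂P) ∂P
      = ∫ ω in A, V ω ∂P - P.real A * ∫ ω, V ω ∂P := by
    rw [integral_sub iV.integrableOn (integrable_const _)]
    simp
  have e3 : ∫ ω, V ω * (A.indicator (fun _ => (1:ℝ)) ω - P.real A) ∂P
      = ∫ ω in A, V ω ∂P - P.real A * ∫ ω, V ω ∂P := by
    have : ∀ ω, V ω * (A.indicator (fun _ => (1:ℝ)) ω - P.real A)
        = A.indicator V ω - P.real A * V ω := by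
      intro ω
      by_cases h : ω ∈ A
      · simp [h]; ring
      · simp [h]; ring
    simp_rw [this]
    rw [integral_sub (iV.indicator hAm) (iV.const_mul _), integral_indicator hAm,
      integral_const_mul]
  have e4 : ∫ ω in B, (A.indicator (fun _ => (1:ℝ)) ω - P.real A) ∂P
      = P.real (A ∩ B) - P.real A * P.real B := by
    rw [integral_sub ((integrable_const (1:ℝ)).indicator hAm).integrableOn (integrable_const _),
      integral_indicator hAm]
    simp [Measure.real, hAm, mul_comm]
  have := le_trans (le_abs_self _) (ha A B hA hB)
  linarith

lemma cov01_abs (P : Measure Ω) [IsProbabilityMeasure P] (m1 m2 : MeasurableSpace Ω)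
    (h1 : m1 ≤ m0) (h2 : m2 ≤ m0) (a : ℝ)
    (ha : ∀ A B, MeasurableSet[m1] A → MeasurableSet[m2] B →
      |P.real (A ∩ B) - P.real A * P.real B| ≤ a)
    (U V : Ω → ℝ) (hU : Measurable[m1] U) (hV : Measurable[m2] V)
    (hU0 : ∀ ω, 0 ≤ U ω) (hU1 : ∀ ω, U ω ≤ 1) (hV0 : ∀ ω, 0 ≤ V ω) (hV1 : ∀ ω, V ω ≤ 1) :
    |∫ ω, U ω * V ω ∂P - (∫ ω, U ω ∂P) * ∫ ω, V ω ∂P| ≤ a := by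
  have hUm := hU.mono h1 le_rfl
  have hVm := hV.mono h2 le_rfl
  have iU : Integrable U P := integrable_of_abs_le P hUm 1 fun ω => by
    rw [abs_of_nonneg (hU0 ω)]; exact hU1 ω
  have iV : Integrable V P := integrable_of_abs_le P hVm 1 fun ω => by
    rw [abs_of_nonneg (hV0 ω)]; exact hV1 ω
  have iUV : Integrable (fun ω => U ω * V ω) P :=
    integrable_of_abs_le P (hUm.mul hVm) 1 fun ω => by
      rw [abs_of_nonneg (mul_nonneg (hU0 ω) (hV0 ω))]
      exact mul_le_one₀ (hU1 ω) (hV0 ω) (hV1 ω)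
  have k1 := cov01 P m1 m2 h1 h2 a ha U V hU hV hU0 hU1 hV0 hV1
  have k2 := cov01 P m1 m2 h1 h2 a ha U (fun ω => 1 - V ω) hU
    (measurable_const.sub hV) hU0 hU1
    (fun ω => by linarith [hV1 ω]) (fun ω => by linarith [hV0 ω])
  simp_rw [mul_sub, mul_one] at k2
  rw [integral_sub iU iUV, integral_sub (integrable_const _) iV] at k2
  simp only [integral_const, probReal_univ, smul_eq_mul, mul_one] at k2
  rw [abs_le]; constructor <;> nlinarith

lemma cov_bdd (P : Measure Ω) [IsProbabilityMeasure P] (m1 m2 : MeasurableSpace Ω)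
    (h1 : m1 ≤ m0) (h2 : m2 ≤ m0) (a : ℝ)
    (ha : ∀ A B, MeasurableSet[m1] A → MeasurableSet[m2] B →
      |P.real (A ∩ B) - P.real A * P.real B| ≤ a)
    (U V : Ω → ℝ) (hU : Measurable[m1] U) (hV : Measurable[m2] V) (b c : ℝ)
    (hU1 : ∀ ω, |U ω| ≤ b) (hV1 : ∀ ω, |V ω| ≤ c) :
    |∫ ω, U ω * V ω ∂P - (∫ ω, U ω ∂P) * ∫ ω, V ω ∂P| ≤ 4 * b * c * a := by
  obtain ⟨ω0⟩ : Nonempty Ω := nonempty_of_isProbabilityMeasure P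
  have hb : 0 ≤ b := le_trans (abs_nonneg _) (hU1 ω0)
  have hc : 0 ≤ c := le_trans (abs_nonneg _) (hV1 ω0)
  have ha0 : 0 ≤ a := le_trans (abs_nonneg _) (ha ∅ ∅ (@MeasurableSet.empty _ m1) (@MeasurableSet.empty _ m2))
  rcases hb.eq_or_lt with hb | hb
  · have : ∀ ω, U ω = 0 := fun ω => by
      have := hU1 ω; rw [← hb] at this; exact abs_nonpos_iff.mp this
    simp [this, ← hb]
  rcases hc.eq_or_lt with hc | hc
  · have : ∀ ω, V ω = 0 := fun ω => by
      have := hV1 ω; rw [← hc] at this; exact abs_nonpos_iff.mp this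
    simp [this, ← hc]
  have hUm := hU.mono h1 le_rfl
  have hVm := hV.mono h2 le_rfl
  have iU : Integrable U P := integrable_of_abs_le P hUm b hU1
  have iV : Integrable V P := integrable_of_abs_le P hVm c hV1
  have iUV : Integrable (fun ω => U ω * V ω) P :=
    integrable_of_abs_le P (hUm.mul hVm) (b * c) fun ω => by
      rw [abs_mul]; exact mul_le_mul (hU1 ω) (hV1 ω) (abs_nonneg _) hb.le
  have k := cov01_abs P m1 m2 h1 h2 a ha (fun ω => (U ω + b) / (2 * b)) (fun ω => (V ω + c) / (2 * c))
    ((hU.add measurable_const).div_const _)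
    ((hV.add measurable_const).div_const _)
    (fun ω => div_nonneg (by linarith [(abs_le.mp (hU1 ω)).1]) (by linarith))
    (fun ω => by rw [div_le_one (by linarith)]; linarith [(abs_le.mp (hU1 ω)).2])
    (fun ω => div_nonneg (by linarith [(abs_le.mp (hV1 ω)).1]) (by linarith))
    (fun ω => by rw [div_le_one (by linarith)]; linarith [(abs_le.mp (hV1 ω)).2])
  have e1 : ∀ ω, (U ω + b) / (2 * b) * ((V ω + c) / (2 * c))
      = (U ω * V ω + c * U ω + b * V ω + b * c) * (1 / (4 * b * c)) := by
    intro ω; field_simp; ring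
  simp_rw [e1] at k
  have iA : Integrable (fun ω => U ω * V ω + c * U ω) P := iUV.add (iU.const_mul c)
  have iB : Integrable (fun ω => U ω * V ω + c * U ω + b * V ω) P := iA.add (iV.const_mul b)
  rw [integral_mul_const, integral_div, integral_div, integral_add iB (integrable_const _),
    integral_add iA (iV.const_mul b), integral_add iUV (iU.const_mul c),
    integral_add iU (integrable_const _), integral_add iV (integrable_const _),
    integral_const_mul, integral_const_mul] at k
  simp only [integral_const, probReal_univ, smul_eq_mul, one_mul] at k
  have e2 : ∫ ω, U ω * V ω ∂P - (∫ ω, U ω ∂P) * ∫ ω, V ω ∂P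
      = 4 * b * c * ((∫ ω, U ω * V ω ∂P + c * ∫ ω, U ω ∂P + b * ∫ ω, V ω ∂P + b * c) * (1 / (4 * b * c))
        - (∫ ω, U ω ∂P + b) / (2 * b) * ((∫ ω, V ω ∂P + c) / (2 * c))) := by
    field_simp; ring
  rw [e2, abs_mul, abs_of_pos (by positivity)]
  exact mul_le_mul_of_nonneg_left k (by positivity)

lemma tail_pt (x y c : ℝ) (hx : 0 ≤ x) (hy : 0 ≤ y) :
    (if c < x then x else 0) * y ≤ (if c < x then x ^ 2 else 0) + (if c < y then y ^ 2 else 0) := by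
  split_ifs with h1 h2 h2
  · nlinarith [sq_nonneg (x - y)]
  · nlinarith
  · nlinarith
  · simp

/-- Covariance inequality with a tail term. -/
lemma cov_tail (P : Measure Ω) [IsProbabilityMeasure P] (m1 m2 : MeasurableSpace Ω)
    (h1 : m1 ≤ m0) (h2 : m2 ≤ m0) (a : ℝ)
    (ha : ∀ A B, MeasurableSet[m1] A → MeasurableSet[m2] B →
      |P.real (A ∩ B) - P.real A * P.real B| ≤ a)
    (U V : Ω → ℝ) (hU : Measurable[m1] U) (hV : Measurable[m2] V)
    (x y : Ω → ℝ) (hx : Measurable[m0] x) (hy : Measurable[m0] y) (M : ℝ)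
    (hxM : ∀ ω, x ω ≤ M) (hyM : ∀ ω, y ω ≤ M)
    (hU1 : ∀ ω, |U ω| ≤ x ω) (hV1 : ∀ ω, |V ω| ≤ y ω) (c : ℝ) (hc : 0 ≤ c) (t : ℝ)
    (htx : ∫ ω, (if c < x ω then x ω ^ 2 else 0) ∂P ≤ t)
    (hty : ∫ ω, (if c < y ω then y ω ^ 2 else 0) ∂P ≤ t) :
    |∫ ω, U ω * V ω ∂P - (∫ ω, U ω ∂P) * ∫ ω, V ω ∂P| ≤ 4 * c ^ 2 * a + 8 * t := by
  have hx0 : ∀ ω, 0 ≤ x ω := fun ω => (abs_nonneg _).trans (hU1 ω)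
  have hy0 : ∀ ω, 0 ≤ y ω := fun ω => (abs_nonneg _).trans (hV1 ω)
  obtain ⟨ω0⟩ : Nonempty Ω := nonempty_of_isProbabilityMeasure P
  have hM : 0 ≤ M := (hx0 ω0).trans (hxM ω0)
  have hUm := hU.mono h1 le_rfl
  have hVm := hV.mono h2 le_rfl
  set cl : ℝ → ℝ := fun z => max (min z c) (-c) with hcl
  have hclm : Measurable cl := (measurable_id.min measurable_const).max measurable_const
  have cl1 : ∀ z, |cl z| ≤ c := fun z => by
    rw [abs_le]; exact ⟨le_max_right _ _, max_le (min_le_right _ _) (by linarith)⟩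
  have cl2 : ∀ z w, |z| ≤ w → |cl z| ≤ w := fun z w h => by
    rw [abs_le] at h ⊢
    simp only [hcl]
    constructor
    · by_cases h3 : w ≤ c
      · exact le_trans (by rw [min_eq_left (by linarith)]; linarith) (le_max_left _ _)
      · exact le_trans (by linarith) (le_max_right _ _)
    · refine max_le (le_trans (min_le_left _ _) h.2) (by linarith)
  have cl3 : ∀ z w, |z| ≤ w → |z - cl z| ≤ if c < w then w else 0 := fun z w h => by
    have h' := abs_le.mp h
    split_ifs with h3
    · simp only [hcl]
      rw [abs_le]
      constructor
      · have : max (min z c) (-c) ≤ z + w := max_le ((min_le_left _ _).trans (by linarith)) (by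
          rcases le_total (-c) (z+w) with h4 | h4
          · exact h4
          · linarith)
        linarith
      · rcases le_total z c with h4 | h4
        · have : z ≤ max (min z c) (-c) := by
            rw [min_eq_left h4]; exact le_max_left _ _
          linarith
        · have : -c ≤ max (min z c) (-c) := le_max_right _ _
          have : c ≤ max (min z c) (-c) := by rw [min_eq_right h4]; exact le_max_left _ _
          linarith
    · push Not at h3
      have : cl z = z := by
        simp only [hcl]; rw [min_eq_left (by linarith), max_eq_left (by linarith)]
      simp [this]
  set X1 : Ω → ℝ := fun ω => if c < x ω then x ω else 0 with hX1
  set Y1 : Ω → ℝ := fun ω => if c < y ω then y ω else 0 with hY1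
  set X2 : Ω → ℝ := fun ω => if c < x ω then x ω ^ 2 else 0 with hX2
  set Y2 : Ω → ℝ := fun ω => if c < y ω then y ω ^ 2 else 0 with hY2
  have mX1 : Measurable[m0] X1 := Measurable.ite (measurableSet_lt measurable_const hx) hx measurable_const
  have mY1 : Measurable[m0] Y1 := Measurable.ite (measurableSet_lt measurable_const hy) hy measurable_const
  have mX2 : Measurable[m0] X2 := Measurable.ite (measurableSet_lt measurable_const hx) (hx.pow_const 2) measurable_const
  have mY2 : Measurable[m0] Y2 := Measurable.ite (measurableSet_lt measurable_const hy) (hy.pow_const 2) measurable_const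
  have bX1 : ∀ ω, |X1 ω| ≤ M := fun ω => by
    simp only [hX1]; split_ifs
    · rw [abs_of_nonneg (hx0 ω)]; exact hxM ω
    · simpa
  have bY1 : ∀ ω, |Y1 ω| ≤ M := fun ω => by
    simp only [hY1]; split_ifs
    · rw [abs_of_nonneg (hy0 ω)]; exact hyM ω
    · simpa
  have bX2 : ∀ ω, |X2 ω| ≤ M ^ 2 := fun ω => by
    simp only [hX2]; split_ifs
    · rw [abs_of_nonneg (by positivity)]; exact pow_le_pow_left₀ (hx0 ω) (hxM ω) 2
    · simp; positivity
  have bY2 : ∀ ω, |Y2 ω| ≤ M ^ 2 := fun ω => by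
    simp only [hY2]; split_ifs
    · rw [abs_of_nonneg (by positivity)]; exact pow_le_pow_left₀ (hy0 ω) (hyM ω) 2
    · simp; positivity
  have iX1 := integrable_of_abs_le P mX1 M bX1
  have iY1 := integrable_of_abs_le P mY1 M bY1
  have iX2 := integrable_of_abs_le P mX2 _ bX2
  have iY2 := integrable_of_abs_le P mY2 _ bY2
  have ix := integrable_of_abs_le P hx M fun ω => by rw [abs_of_nonneg (hx0 ω)]; exact hxM ω
  have iy := integrable_of_abs_le P hy M fun ω => by rw [abs_of_nonneg (hy0 ω)]; exact hyM ω
  have iU := integrable_of_abs_le P hUm M fun ω => (hU1 ω).trans (hxM ω)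
  have iV := integrable_of_abs_le P hVm M fun ω => (hV1 ω).trans (hyM ω)
  have icU := integrable_of_abs_le P (hclm.comp hUm) c fun ω => cl1 _
  have icV := integrable_of_abs_le P (hclm.comp hVm) c fun ω => cl1 _
  have iUV := integrable_of_abs_le P (hUm.mul hVm) (M * M) fun ω => by
    simp only [Pi.mul_apply]
    rw [abs_mul]; exact mul_le_mul ((hU1 ω).trans (hxM ω)) ((hV1 ω).trans (hyM ω)) (abs_nonneg _) hM
  have icUV := integrable_of_abs_le P ((hclm.comp hUm).mul (hclm.comp hVm)) (c * c) fun ω => by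
    simp only [Pi.mul_apply]
    rw [abs_mul]; exact mul_le_mul (cl1 _) (cl1 _) (abs_nonneg _) hc
  simp only [Pi.mul_def, Function.comp_def] at iUV icUV icU icV
  -- main bounded part
  have main := cov_bdd P m1 m2 h1 h2 a ha (fun ω => cl (U ω)) (fun ω => cl (V ω))
    (hclm.comp hU) (hclm.comp hV) c c (fun ω => cl1 _) (fun ω => cl1 _)
  -- product difference
  have d1 : |∫ ω, U ω * V ω ∂P - ∫ ω, cl (U ω) * cl (V ω) ∂P| ≤ 4 * t := by
    rw [← integral_sub iUV icUV]
    refine (abs_integral_le_integral_abs).trans ?_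
    have : ∫ ω, |U ω * V ω - cl (U ω) * cl (V ω)| ∂P ≤ ∫ ω, (2 * X2 ω + 2 * Y2 ω) ∂P := by
      refine integral_mono (iUV.sub icUV).abs ((iX2.const_mul 2).add (iY2.const_mul 2)) ?_
      intro ω
      have q1 := tail_pt (x ω) (y ω) c (hx0 ω) (hy0 ω)
      have q2 := tail_pt (y ω) (x ω) c (hy0 ω) (hx0 ω)
      have e : U ω * V ω - cl (U ω) * cl (V ω)
          = (U ω - cl (U ω)) * V ω + cl (U ω) * (V ω - cl (V ω)) := by ring
      calc |U ω * V ω - cl (U ω) * cl (V ω)|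
          ≤ |U ω - cl (U ω)| * |V ω| + |cl (U ω)| * |V ω - cl (V ω)| := by
            rw [e, ← abs_mul, ← abs_mul]; exact abs_add_le _ _
        _ ≤ X1 ω * y ω + x ω * Y1 ω := by
            refine add_le_add ?_ ?_
            · exact mul_le_mul (cl3 _ _ (hU1 ω)) (hV1 ω) (abs_nonneg _)
                ((abs_nonneg _).trans (cl3 _ _ (hU1 ω)))
            · exact mul_le_mul (cl2 _ _ (hU1 ω)) (cl3 _ _ (hV1 ω)) (abs_nonneg _) (hx0 ω)
        _ ≤ 2 * X2 ω + 2 * Y2 ω := by simp only [hX1, hY1, hX2, hY2]; linarith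
    rw [integral_add (iX2.const_mul 2) (iY2.const_mul 2), integral_const_mul, integral_const_mul] at this
    linarith
  have pr : ∀ (x y : Ω → ℝ) (hx0 : ∀ ω, 0 ≤ x ω) (hy0 : ∀ ω, 0 ≤ y ω),
      Integrable (fun ω => if c < x ω then x ω else 0) P →
      Integrable (fun ω => if c < x ω then x ω ^ 2 else 0) P →
      Integrable (fun ω => if c < y ω then y ω ^ 2 else 0) P → Integrable y P →
      (∫ ω, (if c < x ω then x ω else 0) ∂P) * ∫ ω, y ω ∂P ≤
       (∫ ω, (if c < x ω then x ω ^ 2 else 0) ∂P) + ∫ ω, (if c < y ω then y ω ^ 2 else 0) ∂P := by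
    intro x y hx0 hy0 i1 i2 i3 i4
    have s : ∀ b, 0 ≤ b → (∫ ω, (if c < x ω then x ω else 0) ∂P) * b ≤
       (∫ ω, (if c < x ω then x ω ^ 2 else 0) ∂P) + (if c < b then b ^ 2 else 0) := by
      intro b hb
      rw [← integral_mul_const]
      have := integral_mono (i1.mul_const b) (i2.add (integrable_const (if c < b then b ^ 2 else 0)))
        (fun ω => tail_pt (x ω) b c (hx0 ω) hb)
      simp only [Pi.add_apply] at this
      rw [integral_add i2 (integrable_const _)] at this
      simpa using this
    rw [← integral_const_mul]
    have := integral_mono (i4.const_mul _) ((integrable_const (∫ ω, (if c < x ω then x ω ^ 2 else 0) ∂P)).add i3)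
        (fun ω => s (y ω) (hy0 ω))
    simp only [Pi.add_apply] at this
    rw [integral_add (integrable_const _) i3] at this
    simpa using this
  have d2 : |(∫ ω, U ω ∂P) * ∫ ω, V ω ∂P - (∫ ω, cl (U ω) ∂P) * ∫ ω, cl (V ω) ∂P| ≤ 4 * t := by
    have p1 := pr x y hx0 hy0 iX1 iX2 iY2 iy
    have p2 := pr y x hy0 hx0 iY1 iY2 iX2 ix
    have b1 : |(∫ ω, U ω ∂P) - ∫ ω, cl (U ω) ∂P| ≤ ∫ ω, X1 ω ∂P := by
      rw [← integral_sub iU icU]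
      exact (abs_integral_le_integral_abs).trans
        (integral_mono (iU.sub icU).abs iX1 fun ω => cl3 _ _ (hU1 ω))
    have b2 : |(∫ ω, V ω ∂P) - ∫ ω, cl (V ω) ∂P| ≤ ∫ ω, Y1 ω ∂P := by
      rw [← integral_sub iV icV]
      exact (abs_integral_le_integral_abs).trans
        (integral_mono (iV.sub icV).abs iY1 fun ω => cl3 _ _ (hV1 ω))
    have b3 : |∫ ω, V ω ∂P| ≤ ∫ ω, y ω ∂P :=
      (abs_integral_le_integral_abs).trans (integral_mono iV.abs iy fun ω => hV1 ω)
    have b4 : |∫ ω, cl (U ω) ∂P| ≤ ∫ ω, x ω ∂P :=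
      (abs_integral_le_integral_abs).trans (integral_mono icU.abs ix fun ω => cl2 _ _ (hU1 ω))
    have e : (∫ ω, U ω ∂P) * ∫ ω, V ω ∂P - (∫ ω, cl (U ω) ∂P) * ∫ ω, cl (V ω) ∂P
      = ((∫ ω, U ω ∂P) - ∫ ω, cl (U ω) ∂P) * (∫ ω, V ω ∂P)
        + (∫ ω, cl (U ω) ∂P) * ((∫ ω, V ω ∂P) - ∫ ω, cl (V ω) ∂P) := by ring
    rw [e]
    refine (abs_add_le _ _).trans ?_
    rw [abs_mul, abs_mul]
    have c1 := mul_le_mul b1 b3 (abs_nonneg _) ((abs_nonneg _).trans b1)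
    have c2 := mul_le_mul b4 b2 (abs_nonneg _) ((abs_nonneg _).trans b4)
    have := mul_comm (∫ ω, x ω ∂P) (∫ ω, Y1 ω ∂P)
    linarith
  rw [abs_le] at *
  constructor <;> nlinarith [d1.1, d1.2, d2.1, d2.2, main.1, main.2]

end CovLemmas

section Core

/-- clipping to `[-1,1]` -/
noncomputable def clip1 (x : ℝ) : ℝ := max (min x 1) (-1)

/-- Huber function -/
noncomputable def hub (x : ℝ) : ℝ := clip1 x * x - clip1 x ^ 2 / 2

lemma clip1_abs (x : ℝ) : |clip1 x| ≤ 1 := by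
  rw [abs_le]; exact ⟨le_max_right _ _, max_le (min_le_right _ _) (by norm_num)⟩

lemma clip1_lip (x y : ℝ) : |clip1 x - clip1 y| ≤ |x - y| := by
  unfold clip1
  refine (abs_max_sub_max_le_abs _ _ _).trans ?_
  exact abs_min_sub_min_le_max x 1 y 1 |>.trans (by simp)

lemma clip1_meas : Measurable clip1 :=
  (measurable_id.min measurable_const).max measurable_const

lemma hub_meas : Measurable hub :=
  (clip1_meas.mul measurable_id).sub ((clip1_meas.pow_const 2).div_const 2)

lemma clip1_proj (x h : ℝ) (hh : |h| ≤ 1) : (h - clip1 x) * (x - clip1 x) ≤ 0 := by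
  unfold clip1
  rw [abs_le] at hh
  rcases le_total x 1 with h1 | h1
  · rw [min_eq_left h1]
    rcases le_total x (-1) with h2 | h2
    · rw [max_eq_right h2]; nlinarith
    · rw [max_eq_left h2]; simp
  · rw [min_eq_right h1, max_eq_left (by norm_num)]; nlinarith

lemma hub_step (x u : ℝ) : hub (x + u) ≤ hub x + clip1 x * u + u ^ 2 / 2 := by
  unfold hub
  have := clip1_proj x (clip1 (x + u)) (clip1_abs _)
  nlinarith [sq_nonneg (clip1 (x + u) - clip1 x - u)]

lemma hub_ge (x : ℝ) : clip1 x ^ 2 / 2 ≤ hub x := by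
  unfold hub
  have := clip1_proj x 0 (by simp)
  nlinarith

lemma hub_nonneg (x : ℝ) : 0 ≤ hub x := le_trans (by positivity) (hub_ge x)

lemma hub_le (x : ℝ) : hub x ≤ |x| := by
  unfold hub
  have h1 : clip1 x * x ≤ |x| := by
    calc clip1 x * x ≤ |clip1 x * x| := le_abs_self _
      _ = |clip1 x| * |x| := abs_mul _ _
      _ ≤ 1 * |x| := mul_le_mul_of_nonneg_right (clip1_abs x) (abs_nonneg _)
      _ = |x| := one_mul _
  nlinarith [sq_nonneg (clip1 x)]

lemma tendsto_of_hub {ι : Type*} {l : Filter ι} {x : ι → ℝ}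
    (h : Tendsto (fun i => hub (x i)) l (nhds 0)) : Tendsto x l (nhds 0) := by
  rw [Metric.tendsto_nhds] at h ⊢
  intro ε hε
  set δ := min ε 1 with hδ
  have hδ0 : 0 < δ := lt_min hε one_pos
  filter_upwards [h (δ ^ 2 / 2) (by positivity)] with i hi
  rw [Real.dist_eq, sub_zero] at hi ⊢
  rw [abs_of_nonneg (hub_nonneg _)] at hi
  have h1 : clip1 (x i) ^ 2 < δ ^ 2 := by linarith [hub_ge (x i)]
  have h2 : |clip1 (x i)| < δ := by
    have := sq_lt_sq.mp h1
    rwa [abs_of_pos hδ0] at this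
  have h3 : |clip1 (x i)| < 1 := h2.trans_le (min_le_right _ _)
  have h4 : clip1 (x i) = x i := by
    unfold clip1 at h3 ⊢
    rw [abs_lt] at h3
    rcases le_total (x i) 1 with k1 | k1
    · rw [min_eq_left k1] at h3 ⊢
      rcases le_total (x i) (-1) with k2 | k2
      · rw [max_eq_right k2] at h3; linarith
      · exact max_eq_left k2
    · rw [min_eq_right k1, max_eq_left (by norm_num)] at h3; linarith
  rw [h4] at h2
  exact h2.trans_le (min_le_left _ _)

variable {Ω : Type*} [MeasurableSpace Ω]

lemma alphaCoef_bdd (P : Measure Ω) [IsProbabilityMeasure P] (X : ℕ → Ω → ℝ) (n : ℕ) :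
    ∀ c ∈ { c : ℝ | ∃ (k : ℕ) (A B : Set Ω),
    MeasurableSet[⨆ i ∈ {i : ℕ | i ≤ k}, MeasurableSpace.comap (X i) Real.measurableSpace] A ∧
    MeasurableSet[⨆ i ∈ {i : ℕ | k + n ≤ i}, MeasurableSpace.comap (X i) Real.measurableSpace] B ∧
    c = |(P (A ∩ B)).toReal - (P A).toReal * (P B).toReal| }, c ≤ 1 := by
  rintro c ⟨k, A, B, -, -, rfl⟩
  have h1 : (P (A ∩ B)).toReal ≤ 1 := measureReal_le_one
  have h2 : (P A).toReal ≤ 1 := measureReal_le_one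
  have h3 : (P B).toReal ≤ 1 := measureReal_le_one
  have h4 : 0 ≤ (P (A ∩ B)).toReal := ENNReal.toReal_nonneg
  have h5 : 0 ≤ (P A).toReal := ENNReal.toReal_nonneg
  have h6 : 0 ≤ (P B).toReal := ENNReal.toReal_nonneg
  rw [abs_le]; constructor <;> nlinarith

lemma le_alphaCoef (P : Measure Ω) [IsProbabilityMeasure P] (X : ℕ → Ω → ℝ) (n k : ℕ) (A B : Set Ω)
    (hA : MeasurableSet[⨆ i ∈ {i : ℕ | i ≤ k}, MeasurableSpace.comap (X i) Real.measurableSpace] A)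
    (hB : MeasurableSet[⨆ i ∈ {i : ℕ | k + n ≤ i},
      MeasurableSpace.comap (X i) Real.measurableSpace] B) :
    |P.real (A ∩ B) - P.real A * P.real B| ≤ alphaCoef P X n :=
  le_csSup ⟨1, fun c hc => alphaCoef_bdd P X n c hc⟩ ⟨k, A, B, hA, hB, rfl⟩

lemma alphaCoef_nonneg (P : Measure Ω) [IsProbabilityMeasure P] (X : ℕ → Ω → ℝ) (n : ℕ) :
    0 ≤ alphaCoef P X n :=
  (abs_nonneg _).trans (le_alphaCoef P X n 0 ∅ ∅
    (@MeasurableSet.empty _ (_)) (@MeasurableSet.empty _ (_)))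

lemma alphaCoef_le_one (P : Measure Ω) [IsProbabilityMeasure P] (X : ℕ → Ω → ℝ) (n : ℕ) :
    alphaCoef P X n ≤ 1 :=
  Real.sSup_le (alphaCoef_bdd P X n) zero_le_one

lemma past_le (X : ℕ → Ω → ℝ) (hmeas : ∀ i, Measurable (X i)) (s : Set ℕ) :
    (⨆ i ∈ s, MeasurableSpace.comap (X i) Real.measurableSpace) ≤ ‹MeasurableSpace Ω› :=
  iSup₂_le fun i _ => (hmeas i).comap_le

lemma meas_coord (X : ℕ → Ω → ℝ) (s : Set ℕ) (i : ℕ) (hi : i ∈ s) :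
    Measurable[⨆ i ∈ s, MeasurableSpace.comap (X i) Real.measurableSpace] (X i) := by
  refine Measurable.mono (comap_measurable (X i)) ?_ le_rfl
  exact le_iSup₂ (f := fun i (_ : i ∈ s) => MeasurableSpace.comap (X i) Real.measurableSpace) i hi

/-- covariance with the mixing coefficient, bounded case -/
lemma core_cov (P : Measure Ω) [IsProbabilityMeasure P] (X : ℕ → Ω → ℝ)
    (hmeas : ∀ i, Measurable (X i)) (j l k : ℕ) (hk : j + l ≤ k)
    (U : Ω → ℝ)
    (hU : Measurable[⨆ i ∈ {i : ℕ | i ≤ j}, MeasurableSpace.comap (X i) Real.measurableSpace] U)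
    (T : ℝ → ℝ) (hT : Measurable T) (b M : ℝ) (hUb : ∀ ω, |U ω| ≤ b) (hTM : ∀ x, |T x| ≤ M) :
    |∫ ω, U ω * T (X k ω) ∂P - (∫ ω, U ω ∂P) * ∫ ω, T (X k ω) ∂P|
      ≤ 4 * b * M * alphaCoef P X l :=
  cov_bdd P _ _ (past_le X hmeas _) (past_le X hmeas {i : ℕ | j + l ≤ i}) _
    (fun A B hA hB => le_alphaCoef P X l j A B hA hB) U (fun ω => T (X k ω)) hU
    (hT.comp (meas_coord X _ k hk)) b M hUb (fun ω => hTM _)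

lemma core_cov_tail (P : Measure Ω) [IsProbabilityMeasure P] (X : ℕ → Ω → ℝ)
    (hmeas : ∀ i, Measurable (X i)) (j l k : ℕ) (hk : j + l ≤ k)
    (U : Ω → ℝ)
    (hU : Measurable[⨆ i ∈ {i : ℕ | i ≤ j}, MeasurableSpace.comap (X i) Real.measurableSpace] U)
    (T ψ : ℝ → ℝ) (hT : Measurable T) (hψ : Measurable ψ) (M : ℝ) (hψM : ∀ x, ψ x ≤ M)
    (hUb : ∀ ω, |U ω| ≤ ψ (X j ω)) (hTM : ∀ x, |T x| ≤ ψ x) (c : ℝ) (hc : 0 ≤ c) (t : ℝ)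
    (ht : ∀ i, ∫ ω, (if c < ψ (X i ω) then ψ (X i ω) ^ 2 else 0) ∂P ≤ t) :
    |∫ ω, U ω * T (X k ω) ∂P - (∫ ω, U ω ∂P) * ∫ ω, T (X k ω) ∂P|
      ≤ 4 * c ^ 2 * alphaCoef P X l + 8 * t :=
  cov_tail P _ _ (past_le X hmeas _) (past_le X hmeas {i : ℕ | j + l ≤ i}) _
    (fun A B hA hB => le_alphaCoef P X l j A B hA hB) U (fun ω => T (X k ω)) hU
    (hT.comp (meas_coord X _ k hk)) (fun ω => ψ (X j ω)) (fun ω => ψ (X k ω))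
    (hψ.comp (hmeas j)) (hψ.comp (hmeas k)) M (fun ω => hψM _) (fun ω => hψM _)
    hUb (fun ω => hTM _) c hc t (ht j) (ht k)

lemma core (P : Measure Ω) [IsProbabilityMeasure P] (X : ℕ → Ω → ℝ)
    (hmeas : ∀ i, Measurable (X i)) (hident : ∀ i, Measure.map (X i) P = Measure.map (X 0) P)
    (T ψ : ℝ → ℝ) (hT : Measurable T) (hψ : Measurable ψ) (M : ℝ) (hψ1 : ∀ x, 1 ≤ ψ x)
    (hψM : ∀ x, ψ x ≤ M) (hT0 : ∀ x, 0 ≤ T x) (hTψ : ∀ x, T x ≤ ψ x)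
    (κ : ℝ) (hκ : 1 + ∫ ω, ψ (X 0 ω) ∂P ≤ κ)
    (n q : ℕ) (hn : 1 ≤ n) (hq : 1 ≤ q) (c : ℕ → ℝ) (hc : ∀ l, 0 ≤ c l) :
    ∫ ω, hub ((∑ i ∈ Finset.range n, (T (X i ω) - ∫ ω, T (X 0 ω) ∂P)) / n) ∂P ≤
      4 * M * alphaCoef P X q + κ ^ 2 / n * (∫ ω, ψ (X 0 ω) ^ 2 ∂P +
        ∑ l ∈ Finset.Ico 1 q, (4 * c l ^ 2 * alphaCoef P X l
          + 8 * ∫ ω, (if c l < ψ (X 0 ω) then ψ (X 0 ω) ^ 2 else 0) ∂P)) := by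
  have hnpos : (0:ℝ) < n := by exact_mod_cast hn
  have hM1 : 1 ≤ M := (hψ1 0).trans (hψM 0)
  have tr : ∀ (G : ℝ → ℝ), Measurable G → ∀ i, ∫ ω, G (X i ω) ∂P = ∫ ω, G (X 0 ω) ∂P := by
    intro G hG i
    rw [← integral_map (hmeas i).aemeasurable hG.aestronglyMeasurable, hident i,
      integral_map (hmeas 0).aemeasurable hG.aestronglyMeasurable]
  set m := ∫ ω, T (X 0 ω) ∂P with hm
  have iψ : ∀ i, Integrable (fun ω => ψ (X i ω)) P := fun i =>
    integrable_of_abs_le P (hψ.comp (hmeas i)) M fun ω => by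
      rw [abs_of_nonneg (by linarith [hψ1 (X i ω)])]; exact hψM _
  have iT : ∀ i, Integrable (fun ω => T (X i ω)) P := fun i =>
    integrable_of_abs_le P (hT.comp (hmeas i)) M fun ω => by
      rw [abs_of_nonneg (hT0 _)]; exact (hTψ _).trans (hψM _)
  have hm0 : 0 ≤ m := integral_nonneg fun ω => hT0 _
  have hmκ : 1 + m ≤ κ := by
    have : m ≤ ∫ ω, ψ (X 0 ω) ∂P := integral_mono (iT 0) (iψ 0) fun ω => hTψ _
    linarith
  have hκ1 : 1 ≤ κ := by linarith
  have hTabs : ∀ x, |T x| ≤ ψ x := fun x => by rw [abs_of_nonneg (hT0 x)]; exact hTψ x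
  have hZ : ∀ x, |T x - m| ≤ κ * ψ x := fun x => by
    have := hψ1 x; have := hT0 x; have := hTψ x
    rw [abs_le]; constructor <;> nlinarith
  set a : ℕ → Ω → ℝ := fun k ω => (∑ i ∈ Finset.range k, (T (X i ω) - m)) / n with ha
  have amp : ∀ k, Measurable[⨆ i ∈ {i : ℕ | i ≤ k}, MeasurableSpace.comap (X i) Real.measurableSpace]
      (a (k + 1)) := by
    intro k
    refine Measurable.div_const (Finset.measurable_sum _ fun i hi => ?_) _
    refine Measurable.sub (hT.comp (meas_coord X _ i ?_)) measurable_const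
    simp at hi ⊢; omega
  have amp' : ∀ k, Measurable[⨆ i ∈ {i : ℕ | i ≤ k}, MeasurableSpace.comap (X i) Real.measurableSpace]
      (a k) := by
    intro k
    refine Measurable.div_const (Finset.measurable_sum _ fun i hi => ?_) _
    refine Measurable.sub (hT.comp (meas_coord X _ i ?_)) measurable_const
    simp at hi ⊢; omega
  have am : ∀ k, Measurable (a k) := fun k => (amp' k).mono (past_le X hmeas _) le_rfl
  have ab : ∀ k ω, |a k ω| ≤ k * (κ * M) / n := by
    intro k ω
    simp only [ha]
    rw [abs_div, abs_of_pos hnpos]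
    gcongr
    calc |∑ i ∈ Finset.range k, (T (X i ω) - m)| ≤ ∑ i ∈ Finset.range k, |T (X i ω) - m| :=
          Finset.abs_sum_le_sum_abs _ _
      _ ≤ ∑ i ∈ Finset.range k, κ * M := Finset.sum_le_sum fun i _ =>
          (hZ _).trans (mul_le_mul_of_nonneg_left (hψM _) (by linarith))
      _ = k * (κ * M) := by simp
  have ihub : ∀ k, Integrable (fun ω => hub (a k ω)) P := fun k =>
    integrable_of_abs_le P (hub_meas.comp (am k)) (k * (κ * M) / n) fun ω => by
      rw [abs_of_nonneg (hub_nonneg _)]; exact (hub_le _).trans (ab k ω)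
  set R : ℕ → ℝ := fun l => 4 * c l ^ 2 * alphaCoef P X l
          + 8 * ∫ ω, (if c l < ψ (X 0 ω) then ψ (X 0 ω) ^ 2 else 0) ∂P with hR
  have hR0 : ∀ l, 0 ≤ R l := fun l => by
    have := alphaCoef_nonneg P X l
    have h2 : 0 ≤ ∫ ω, (if c l < ψ (X 0 ω) then ψ (X 0 ω) ^ 2 else 0) ∂P :=
      integral_nonneg fun ω => by dsimp only; split_ifs <;> positivity
    simp only [hR]; positivity
  -- centered expectation
  have cen : ∀ (U : Ω → ℝ) (b : ℝ) (k : ℕ), Measurable U → (∀ ω, |U ω| ≤ b) →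
      ∫ ω, U ω * (T (X k ω) - m) ∂P
       = ∫ ω, U ω * T (X k ω) ∂P - (∫ ω, U ω ∂P) * ∫ ω, T (X k ω) ∂P := by
    intro U b k hU hb
    have iU := integrable_of_abs_le P hU b hb
    have hb0 : 0 ≤ b := by
      obtain ⟨ω0⟩ : Nonempty Ω := nonempty_of_isProbabilityMeasure P
      exact (abs_nonneg _).trans (hb ω0)
    have iUT : Integrable (fun ω => U ω * T (X k ω)) P :=
      integrable_of_abs_le P (hU.mul (hT.comp (hmeas k))) (b * M) fun ω => by
        rw [abs_mul]; exact mul_le_mul (hb ω) ((hTabs _).trans (hψM _)) (abs_nonneg _) hb0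
    simp_rw [mul_sub]
    rw [integral_sub iUT (iU.mul_const _), integral_mul_const, tr T hT k]
  have hlag : ∀ k l, 1 ≤ l → 
      ∫ ω, (clip1 (a (k + 1 - l) ω) - clip1 (a (k - l) ω)) * (T (X k ω) - m) ∂P ≤ κ / n * R l := by
    intro k l hl
    have hpos : 0 ≤ κ / n * R l := mul_nonneg (by positivity) (hR0 l)
    rcases le_or_gt l k with hlk | hlk
    · obtain ⟨j, rfl⟩ := Nat.exists_eq_add_of_le' hlk
      have e1 : j + l + 1 - l = j + 1 := by omega
      have e2 : j + l - l = j := by omega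
      rw [e1, e2]
      have hd : ∀ ω, |clip1 (a (j + 1) ω) - clip1 (a j ω)| ≤ κ / n * ψ (X j ω) := by
        intro ω
        refine (clip1_lip _ _).trans ?_
        have : a (j + 1) ω - a j ω = (T (X j ω) - m) / n := by
          simp only [ha]; rw [Finset.sum_range_succ]; ring
        rw [this, abs_div, abs_of_pos hnpos, div_mul_eq_mul_div]
        gcongr; exact hZ _
      have hdm := ((clip1_meas.comp (amp j)).sub (clip1_meas.comp (amp' j)))
      have hdm' := hdm.mono (past_le X hmeas _) le_rfl
      have k1 := core_cov_tail P X hmeas j l (j + l) le_rfl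
        (fun ω => (κ / n)⁻¹ * (clip1 (a (j + 1) ω) - clip1 (a j ω))) (hdm.const_mul _)
        T ψ hT hψ M hψM (fun ω => by
          rw [abs_mul, abs_of_pos (by positivity), inv_mul_le_iff₀ (by positivity)]
          exact hd ω) hTabs (c l) (hc l)
        (∫ ω, (if c l < ψ (X 0 ω) then ψ (X 0 ω) ^ 2 else 0) ∂P) (fun i => by
          rw [tr (fun x => if c l < ψ x then ψ x ^ 2 else 0)
            (Measurable.ite (measurableSet_lt measurable_const hψ) (hψ.pow_const 2) measurable_const) i])
      rw [cen (fun ω => clip1 (a (j + 1) ω) - clip1 (a j ω)) (κ / n * M) (j + l) hdm'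
        (fun ω => (hd ω).trans (by gcongr; exact hψM _))]
      simp_rw [mul_assoc (κ / n : ℝ)⁻¹] at k1
      rw [integral_const_mul, integral_const_mul, mul_assoc, ← mul_sub, abs_mul,
        abs_of_pos (by positivity), inv_mul_le_iff₀ (by positivity)] at k1
      exact (le_abs_self _).trans k1
    · have e1 : k + 1 - l = 0 := by omega
      have e2 : k - l = 0 := by omega
      rw [e1, e2]; simpa using hpos
  have hfar : ∀ k, ∫ ω, clip1 (a (k + 1 - q) ω) * (T (X k ω) - m) ∂P ≤ 4 * M * alphaCoef P X q := by
    intro k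
    rcases le_or_gt q k with hlk | hlk
    · obtain ⟨j, rfl⟩ := Nat.exists_eq_add_of_le' hlk
      have e1 : j + q + 1 - q = j + 1 := by omega
      rw [e1, cen (fun ω => clip1 (a (j + 1) ω)) 1 (j + q) (clip1_meas.comp (am _)) (fun ω => clip1_abs _)]
      have := core_cov P X hmeas j q (j + q) le_rfl (fun ω => clip1 (a (j + 1) ω))
        (clip1_meas.comp (amp j)) T hT 1 M (fun ω => clip1_abs _) (fun x => (hTabs x).trans (hψM x))
      rw [mul_one] at this
      exact (le_abs_self _).trans this
    · have e1 : k + 1 - q = 0 := by omega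
      have : ∀ ω, clip1 (a 0 ω) = 0 := fun ω => by simp [ha, clip1]
      rw [e1]
      simp only [this, zero_mul, integral_zero]
      exact mul_nonneg (by linarith) (alphaCoef_nonneg P X q)
  have icl : ∀ i k, Integrable (fun ω => clip1 (a i ω) * (T (X k ω) - m)) P := fun i k =>
    integrable_of_abs_le P ((clip1_meas.comp (am i)).mul ((hT.comp (hmeas k)).sub_const m)) (κ * M) fun ω => by
      calc |clip1 (a i ω) * (T (X k ω) - m)| = |clip1 (a i ω)| * |T (X k ω) - m| := abs_mul _ _
        _ ≤ 1 * (κ * M) := mul_le_mul (clip1_abs _) ((hZ _).trans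
              (mul_le_mul_of_nonneg_left (hψM _) (by linarith))) (abs_nonneg _) zero_le_one
        _ = _ := one_mul _
  have hmain : ∀ k, ∫ ω, clip1 (a k ω) * (T (X k ω) - m) ∂P ≤
      4 * M * alphaCoef P X q + ∑ l ∈ Finset.Ico 1 q, κ / n * R l := by
    intro k
    have ind : ∀ p, 1 ≤ p → ∫ ω, clip1 (a k ω) * (T (X k ω) - m) ∂P ≤
        ∫ ω, clip1 (a (k + 1 - p) ω) * (T (X k ω) - m) ∂P + ∑ l ∈ Finset.Ico 1 p, κ / n * R l := by
      intro p hp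
      induction p, hp using Nat.le_induction with
      | base => simp
      | succ p hp ih =>
        rw [Finset.sum_Ico_succ_top hp]
        have h1 := hlag k p hp
        simp_rw [sub_mul] at h1
        rw [integral_sub (icl _ _) (icl _ _)] at h1
        have e : k + 1 - (p + 1) = k - p := by omega
        rw [e]; linarith
    linarith [ind q hq, hfar k]
  have hstep : ∀ k, ∫ ω, hub (a (k + 1) ω) ∂P ≤ ∫ ω, hub (a k ω) ∂P +
      ((4 * M * alphaCoef P X q + ∑ l ∈ Finset.Ico 1 q, κ / n * R l) / n
        + κ ^ 2 / n * (∫ ω, ψ (X 0 ω) ^ 2 ∂P) / n) := by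
    intro k
    have iψ2 : Integrable (fun ω => ψ (X k ω) ^ 2) P :=
      integrable_of_abs_le P ((hψ.comp (hmeas k)).pow_const 2) (M ^ 2) fun ω => by
        rw [abs_of_nonneg (by positivity)]
        exact pow_le_pow_left₀ (by linarith [hψ1 (X k ω)]) (hψM _) 2
    have hp : ∀ ω, hub (a (k + 1) ω) ≤ hub (a k ω) + clip1 (a k ω) * (T (X k ω) - m) / n
        + κ ^ 2 / n * ψ (X k ω) ^ 2 / n := by
      intro ω
      have e : a (k + 1) ω = a k ω + (T (X k ω) - m) / n := by
        simp only [ha]; rw [Finset.sum_range_succ]; ring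
      have h1 := hub_step (a k ω) ((T (X k ω) - m) / n)
      rw [← e] at h1
      have h2 : (T (X k ω) - m) ^ 2 ≤ (κ * ψ (X k ω)) ^ 2 := by
        rw [← sq_abs]; exact pow_le_pow_left₀ (abs_nonneg _) (hZ _) 2
      have h3 : ((T (X k ω) - m) / n) ^ 2 / 2 ≤ κ ^ 2 / n * ψ (X k ω) ^ 2 / n := by
        have : κ ^ 2 / n * ψ (X k ω) ^ 2 / n = (κ * ψ (X k ω)) ^ 2 / n ^ 2 := by
          field_simp
        rw [this, div_pow, div_div, div_le_div_iff₀ (by positivity) (by positivity)]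
        have := sq_nonneg (T (X k ω) - m)
        have hn2 : (0:ℝ) < (n:ℝ)^2 := by positivity
        nlinarith
      have h4 : clip1 (a k ω) * ((T (X k ω) - m) / n) = clip1 (a k ω) * (T (X k ω) - m) / n := by ring
      linarith
    have i1 : Integrable (fun ω => hub (a k ω) + clip1 (a k ω) * (T (X k ω) - m) / n) P :=
      (ihub k).add ((icl k k).div_const _)
    have i2 : Integrable (fun ω => κ ^ 2 / n * ψ (X k ω) ^ 2 / n) P := (iψ2.const_mul _).div_const _
    have h5 := integral_mono (ihub (k + 1)) (i1.add i2) hp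
    simp only [Pi.add_apply] at h5
    rw [integral_add i1 i2, integral_add (ihub k) ((icl k k).div_const _), integral_div, integral_div,
      integral_const_mul, tr (fun x => ψ x ^ 2) (hψ.pow_const 2) k] at h5
    have h6 : (∫ ω, clip1 (a k ω) * (T (X k ω) - m) ∂P) / n ≤
      (4 * M * alphaCoef P X q + ∑ l ∈ Finset.Ico 1 q, κ / n * R l) / n := by
      gcongr; exact hmain k
    linarith
  have hind : ∀ k : ℕ, ∫ ω, hub (a k ω) ∂P ≤ k *
      ((4 * M * alphaCoef P X q + ∑ l ∈ Finset.Ico 1 q, κ / n * R l) / n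
        + κ ^ 2 / n * (∫ ω, ψ (X 0 ω) ^ 2 ∂P) / n) := by
    intro k
    induction k with
    | zero => simp [ha, hub, clip1]
    | succ k ih => push_cast; linarith [hstep k]
  refine (hind n).trans ?_
  have e : (n:ℝ) * ((4 * M * alphaCoef P X q + ∑ l ∈ Finset.Ico 1 q, κ / n * R l) / n
        + κ ^ 2 / n * (∫ ω, ψ (X 0 ω) ^ 2 ∂P) / n)
      = 4 * M * alphaCoef P X q + (∑ l ∈ Finset.Ico 1 q, κ / n * R l)
        + κ ^ 2 / n * (∫ ω, ψ (X 0 ω) ^ 2 ∂P) := by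
    field_simp
  rw [e, ← Finset.mul_sum, mul_add]
  have hs : 0 ≤ ∑ l ∈ Finset.Ico 1 q, R l := Finset.sum_nonneg fun l _ => hR0 l
  have : κ / n * ∑ l ∈ Finset.Ico 1 q, R l ≤ κ ^ 2 / n * ∑ l ∈ Finset.Ico 1 q, R l := by
    gcongr
    nlinarith
  linarith

end Core

section Quantile

lemma rcInv_nonneg (h : ℝ → ℝ) (y : ℝ) : 0 ≤ rcInv h y :=
  Real.sSup_nonneg fun _ hx => hx.1

lemma rcInv_anti (h : ℝ → ℝ) (y z : ℝ) (hyz : y ≤ z) (hb : BddAbove { x : ℝ | 0 ≤ x ∧ y < h x }) :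
    rcInv h z ≤ rcInv h y :=
  Real.sSup_le (fun _ hx => le_csSup hb ⟨hx.1, hyz.trans_lt hx.2⟩) (rcInv_nonneg _ _)

lemma alphaExt_bdd (a : ℕ → ℝ) (ha : Tendsto a atTop (nhds 0)) (y : ℝ) (hy : 0 < y) :
    BddAbove { x : ℝ | 0 ≤ x ∧ y < alphaExt a x } := by
  obtain ⟨N, hN⟩ := (ha.eventually (gt_mem_nhds hy)).exists_forall_of_atTop
  refine ⟨N + 1, fun x hx => ?_⟩
  by_contra hlt
  push Not at hlt
  have h1 : ¬ x < 1 := by have : (0:ℝ) ≤ N := Nat.cast_nonneg N; linarith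
  have h2 := hx.2
  simp only [alphaExt, h1, if_false] at h2
  have := hN ⌊x⌋₊ (Nat.le_floor (by linarith))
  linarith

lemma le_rcInv_alpha (a : ℕ → ℝ) (ha : Tendsto a atTop (nhds 0)) (y : ℝ) (hy : 0 < y)
    (l : ℕ) (hl : 1 ≤ l) (h : y < a l) : (l : ℝ) ≤ rcInv (alphaExt a) y := by
  refine le_csSup (alphaExt_bdd a ha y hy) ⟨Nat.cast_nonneg l, ?_⟩
  have : ¬ (l : ℝ) < 1 := by push Not; exact_mod_cast hl
  simpa [alphaExt, this] using h

variable {Ω : Type*} [MeasurableSpace Ω]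

lemma distFun_eq_cdf (P : Measure Ω) [IsProbabilityMeasure P] (W : Ω → ℝ) (hW : Measurable W) (x : ℝ) :
    distFun P W x = ProbabilityTheory.cdf (P.map W) x := by
  have : IsProbabilityMeasure (P.map W) := Measure.isProbabilityMeasure_map hW.aemeasurable
  rw [ProbabilityTheory.cdf_eq_real, Measure.real, Measure.map_apply hW measurableSet_Iic]
  rfl

lemma one_sub_distFun (P : Measure Ω) [IsProbabilityMeasure P] (W : Ω → ℝ) (hW : Measurable W) (x : ℝ) :
    1 - distFun P W x = P.real {ω | x < W ω} := by
  have h : {ω | x < W ω} = {ω | W ω ≤ x}ᶜ := by ext; simp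
  rw [h, probReal_compl_eq_one_sub (measurableSet_le hW measurable_const)]
  rfl

lemma quant_bdd (P : Measure Ω) [IsProbabilityMeasure P] (W : Ω → ℝ) (hW : Measurable W)
    (s : ℝ) (hs : 0 < s) :
    BddAbove { x : ℝ | 0 ≤ x ∧ s < 1 - distFun P W x } := by
  have h1 : Tendsto (fun x => 1 - distFun P W x) atTop (nhds 0) := by
    have := (ProbabilityTheory.tendsto_cdf_atTop (P.map W)).const_sub 1
    simpa [distFun_eq_cdf P W hW] using this
  obtain ⟨N, hN⟩ := (h1.eventually (gt_mem_nhds hs)).exists_forall_of_atTop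
  refine ⟨N, fun x hx => ?_⟩
  by_contra hlt
  push Not at hlt
  linarith [hN x hlt.le, hx.2]

lemma quant_lt (P : Measure Ω) [IsProbabilityMeasure P] (W : Ω → ℝ) (hW : Measurable W)
    (s : ℝ) (hs : 0 < s) (x : ℝ) (hx : 0 ≤ x) :
    x < rcInv (fun x => 1 - distFun P W x) s ↔ s < P.real {ω | x < W ω} := by
  rw [← one_sub_distFun P W hW]
  constructor
  · intro h
    have hne : { x : ℝ | 0 ≤ x ∧ s < 1 - distFun P W x }.Nonempty := by
      by_contra hne
      rw [Set.not_nonempty_iff_eq_empty] at hne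
      simp only [rcInv] at h
      rw [hne, Real.sSup_empty] at h; linarith
    obtain ⟨y, hy, hxy⟩ := exists_lt_of_lt_csSup hne h
    refine hy.2.trans_le ?_
    rw [one_sub_distFun P W hW, one_sub_distFun P W hW]
    exact measureReal_mono fun ω hω => lt_trans hxy hω
  · intro h
    rw [distFun_eq_cdf P W hW] at h
    have hc := (ProbabilityTheory.cdf (P.map W)).right_continuous x
    have hc' : Tendsto (ProbabilityTheory.cdf (P.map W)) (nhdsWithin x (Ioi x))
      (nhds (ProbabilityTheory.cdf (P.map W) x)) := hc.tendsto.mono_left (nhdsWithin_mono _ Ioi_subset_Ici_self)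
    have h3 : ∀ᶠ y in nhdsWithin x (Ioi x), ProbabilityTheory.cdf (P.map W) y < 1 - s :=
      hc'.eventually (gt_mem_nhds (by linarith))
    obtain ⟨y, hy1, hy2⟩ := (h3.and self_mem_nhdsWithin).exists
    have hy2 : x < y := hy2
    refine hy2.trans_le (le_csSup (quant_bdd P W hW s hs) ⟨by linarith, ?_⟩)
    simp only [distFun_eq_cdf P W hW]; linarith

lemma quant_antiOn (P : Measure Ω) [IsProbabilityMeasure P] (W : Ω → ℝ) (hW : Measurable W) :
    AntitoneOn (rcInv (fun x => 1 - distFun P W x)) (Ioo (0:ℝ) 1) :=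
  fun y hy _ _ hyz => rcInv_anti _ _ _ hyz (quant_bdd P W hW y hy.1)

instance : IsProbabilityMeasure (volume.restrict (Ioo (0:ℝ) 1)) := ⟨by simp⟩

lemma quant_ident (P : Measure Ω) [IsProbabilityMeasure P] (W : Ω → ℝ) (hW : Measurable W)
    (hW0 : ∀ ω, 0 ≤ W ω) :
    ProbabilityTheory.IdentDistrib (rcInv (fun x => 1 - distFun P W x)) W
      (volume.restrict (Ioo (0:ℝ) 1)) P := by
  have hm : AEMeasurable (rcInv (fun x => 1 - distFun P W x)) (volume.restrict (Ioo (0:ℝ) 1)) :=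
    aemeasurable_restrict_of_antitoneOn measurableSet_Ioo (quant_antiOn P W hW)
  refine ⟨hm, hW.aemeasurable, ?_⟩
  have : IsProbabilityMeasure (P.map W) := Measure.isProbabilityMeasure_map hW.aemeasurable
  have : IsProbabilityMeasure ((volume.restrict (Ioo (0:ℝ) 1)).map (rcInv (fun x => 1 - distFun P W x))) :=
    Measure.isProbabilityMeasure_map hm
  refine Measure.ext_of_Iic _ _ fun x => ?_
  rw [Measure.map_apply_of_aemeasurable hm measurableSet_Iic, Measure.map_apply hW measurableSet_Iic]
  rcases lt_or_ge x 0 with hx | hx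
  · have e1 : (rcInv (fun x => 1 - distFun P W x)) ⁻¹' Iic x = ∅ := by
      ext s; simp only [mem_preimage, mem_Iic, mem_empty_iff_false, iff_false]
      linarith [rcInv_nonneg (fun x => 1 - distFun P W x) s]
    have e2 : W ⁻¹' Iic x = ∅ := by
      ext s; simp only [mem_preimage, mem_Iic, mem_empty_iff_false, iff_false]
      linarith [hW0 s]
    rw [e1, e2]; simp
  · have hp1 : P.real {ω | x < W ω} ≤ 1 := measureReal_le_one
    have hp0 : 0 ≤ P.real {ω | x < W ω} := measureReal_nonneg
    have e0 : ((volume : Measure ℝ).restrict (Ioo (0:ℝ) 1)) ((rcInv (fun x => 1 - distFun P W x)) ⁻¹' Iic x)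
       = ((volume : Measure ℝ).restrict (Ioo (0:ℝ) 1)) (Ici (P.real {ω | x < W ω})) := by
      refine measure_congr ?_
      filter_upwards [ae_restrict_mem measurableSet_Ioo] with s hs
      refine propext ?_
      change rcInv (fun x => 1 - distFun P W x) s ≤ x ↔ P.real {ω | x < W ω} ≤ s
      rw [← not_lt, ← not_lt, quant_lt P W hW s hs.1 x hx]
    rw [e0, Measure.restrict_apply measurableSet_Ici]
    have e1 : (volume : Measure ℝ) (Ici (P.real {ω | x < W ω}) ∩ Ioo 0 1)
        = (volume : Measure ℝ) (Ioo (P.real {ω | x < W ω}) 1) := by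
      apply le_antisymm
      · refine (measure_mono (t := Ico (P.real {ω | x < W ω}) 1) fun s hs => ⟨hs.1, hs.2.2⟩).trans ?_
        rw [Real.volume_Ico, Real.volume_Ioo]
      · exact measure_mono fun s hs => ⟨hs.1.le, lt_of_le_of_lt hp0 hs.1, hs.2⟩
    rw [e1, Real.volume_Ioo, ← one_sub_distFun P W hW]
    simp only [distFun, sub_sub_cancel]
    rw [ENNReal.ofReal_toReal (measure_ne_top _ _)]
    rfl

/-- The bounding function. -/
noncomputable def bigPhi (n : ℕ) (b t : ℝ) : ℝ :=
  (if (n:ℝ) < t then (n:ℝ) else 0) + (if (n:ℝ) ≤ b * t then min t n else 0)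
    + (if b * t < n then t ^ 2 * b / n else 0)

lemma bigPhi_nonneg (n : ℕ) (b t : ℝ) (hb : 0 ≤ b) (ht : 0 ≤ t) : 0 ≤ bigPhi n b t := by
  unfold bigPhi
  have : (0:ℝ) ≤ min t n := le_min ht (Nat.cast_nonneg n)
  refine add_nonneg (add_nonneg ?_ ?_) ?_ <;> split_ifs <;> positivity

lemma bigPhi_le (n : ℕ) (b t : ℝ) (hb : 0 ≤ b) (ht : 0 ≤ t) :
    bigPhi n b t ≤ n + n + t := by
  unfold bigPhi
  have hn : (0:ℝ) ≤ n := Nat.cast_nonneg n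
  refine add_le_add (add_le_add ?_ ?_) ?_
  · split_ifs <;> linarith
  · split_ifs
    · exact min_le_right _ _
    · exact hn
  · split_ifs with h
    · have hn' : (0:ℝ) < n := lt_of_le_of_lt (by positivity) h
      rw [div_le_iff₀ hn']; nlinarith
    · exact ht

lemma bigPhi_meas (n : ℕ) : Measurable (fun p : ℝ × ℝ => bigPhi n p.1 p.2) := by
  unfold bigPhi
  refine Measurable.add (Measurable.add ?_ ?_) ?_
  · exact Measurable.ite (measurableSet_lt (by fun_prop) (by fun_prop)) (by fun_prop) (by fun_prop)
  · exact Measurable.ite (measurableSet_le (by fun_prop) (by fun_prop)) (by fun_prop) (by fun_prop)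
  · exact Measurable.ite (measurableSet_lt (by fun_prop) (by fun_prop)) (by fun_prop) (by fun_prop)

lemma select (P : Measure Ω) [IsProbabilityMeasure P] (W : Ω → ℝ) (hW : Measurable W)
    (hW1 : ∀ ω, 1 ≤ W ω) (a : ℕ → ℝ) (ha : Tendsto a atTop (nhds 0)) (ha1 : ∀ l, a l ≤ 1)
    (n : ℕ) (hn : 1 ≤ n) :
    ∃ (q : ℕ) (M : ℝ), 1 ≤ q ∧ 1 ≤ M ∧ M ≤ n ∧ q * M ≤ 2 * n ∧
      (∀ u ∈ Ioo (0:ℝ) 1, u < a q → (n:ℝ) / q ≤ rcInv (fun x => 1 - distFun P W x) u) ∧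
      (∀ u ∈ Ioo (0:ℝ) 1, M < rcInv (fun x => 1 - distFun P W x) u → M < n →
        (n:ℝ) ≤ rcInv (alphaExt a) u * rcInv (fun x => 1 - distFun P W x) u) := by
  classical
  have hnpos : (0:ℝ) < n := by exact_mod_cast hn
  have hex : ∃ q : ℕ, 1 ≤ q ∧ a q ≤ P.real {ω | (n:ℝ) / q ≤ W ω} := by
    refine ⟨n, hn, ?_⟩
    have : {ω | (n:ℝ) / n ≤ W ω} = univ := by
      ext ω; simp [div_self hnpos.ne', hW1 ω]
    rw [this, probReal_univ]; exact ha1 n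
  set q := Nat.find hex with hq
  obtain ⟨hq1, hq2⟩ := Nat.find_spec hex
  rw [← hq] at hq1 hq2
  have hqn : q ≤ n := by
    refine Nat.find_min' hex ⟨hn, ?_⟩
    have : {ω | (n:ℝ) / n ≤ W ω} = univ := by
      ext ω; simp [div_self hnpos.ne', hW1 ω]
    rw [this, probReal_univ]; exact ha1 n
  have hqpos : (0:ℝ) < q := by exact_mod_cast hq1
  have first : ∀ u ∈ Ioo (0:ℝ) 1, u < a q → (n:ℝ) / q ≤ rcInv (fun x => 1 - distFun P W x) u := by
    intro u hu hua
    refine le_of_forall_lt fun x hx => ?_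
    rcases lt_or_ge x 0 with h0 | h0
    · exact h0.trans_le (rcInv_nonneg _ _)
    · rw [quant_lt P W hW u hu.1 x h0]
      exact (hua.trans_le hq2).trans_le (measureReal_mono fun ω hω => lt_of_lt_of_le hx hω)
  rcases hq1.eq_or_lt with h1 | h1
  · refine ⟨q, n, hq1, by exact_mod_cast hn, le_rfl, ?_, first, fun u _ _ h => absurd h (lt_irrefl _)⟩
    rw [← h1]; push_cast; linarith
  · have hq' : (1:ℝ) ≤ (q:ℝ) - 1 := by
      have : (2:ℝ) ≤ q := by exact_mod_cast h1
      linarith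
    have hcast : ((q - 1 : ℕ) : ℝ) = (q:ℝ) - 1 := by push_cast [hq1]; ring
    have hmin := Nat.find_min hex (m := q - 1) (by omega)
    have hmin' : P.real {ω | (n:ℝ) / ((q:ℝ) - 1) ≤ W ω} < a (q - 1) := by
      by_contra hcon
      push Not at hcon
      exact hmin ⟨by omega, by rw [hcast]; exact hcon⟩
    refine ⟨q, n / ((q:ℝ) - 1), hq1, ?_, ?_, ?_, first, ?_⟩
    · rw [le_div_iff₀ (by linarith)]
      have : (q:ℝ) ≤ n := by exact_mod_cast hqn
      linarith
    · exact div_le_self hnpos.le hq'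
    · rw [← mul_div_assoc, div_le_iff₀ (by linarith)]; nlinarith
    · intro u hu hM _
      have hM0 : 0 ≤ (n:ℝ) / ((q:ℝ) - 1) := div_nonneg hnpos.le (by linarith)
      have h2 := (quant_lt P W hW u hu.1 _ hM0).mp hM
      have hmo : P.real {ω | (n:ℝ) / ((q:ℝ) - 1) < W ω} ≤ P.real {ω | (n:ℝ) / ((q:ℝ) - 1) ≤ W ω} :=
        measureReal_mono (fun ω (hω : (n:ℝ) / ((q:ℝ) - 1) < W ω) =>
          show (n:ℝ) / ((q:ℝ) - 1) ≤ W ω from hω.le)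
      have h3 : u < a (q - 1) := (h2.trans_le hmo).trans hmin'
      have h4 := le_rcInv_alpha a ha u hu.1 (q - 1) (by omega) h3
      rw [hcast] at h4
      calc (n:ℝ) = ((q:ℝ) - 1) * (n / ((q:ℝ) - 1)) := by field_simp
        _ ≤ _ := mul_le_mul h4 hM.le hM0 (rcInv_nonneg _ _)

end Quantile

section PhiBounds

lemma card_lag (a : ℕ → ℝ) (ha : Tendsto a atTop (nhds 0)) (q : ℕ) (hq : 1 ≤ q) (u : ℝ) (hu : 0 < u) :
    (1 + ∑ l ∈ Finset.Ico 1 q, (if u < a l then (1:ℝ) else 0)) ≤ q ∧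
    (1 + ∑ l ∈ Finset.Ico 1 q, (if u < a l then (1:ℝ) else 0)) ≤ 1 + rcInv (alphaExt a) u := by
  rw [← Finset.sum_filter, Finset.sum_const, nsmul_eq_mul, mul_one]
  constructor
  · have h1 : ((Finset.Ico 1 q).filter fun l => u < a l).card ≤ q - 1 :=
      (Finset.card_filter_le _ _).trans (by simp)
    have h2 : 1 + ((Finset.Ico 1 q).filter fun l => u < a l).card ≤ q := by omega
    exact_mod_cast h2
  · have hA := rcInv_nonneg (alphaExt a) u
    have h1 : ((Finset.Ico 1 q).filter fun l => u < a l) ⊆ Finset.Icc 1 ⌊rcInv (alphaExt a) u⌋₊ := by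
      intro l hl
      simp only [Finset.mem_filter, Finset.mem_Ico, Finset.mem_Icc] at hl ⊢
      exact ⟨hl.1.1, Nat.le_floor (le_rcInv_alpha a ha u hu l hl.1.1 hl.2)⟩
    have h2 := Finset.card_le_card h1
    rw [Nat.card_Icc, Nat.add_sub_cancel] at h2
    have h3 : ((((Finset.Ico 1 q).filter fun l => u < a l).card : ℕ) : ℝ) ≤ ⌊rcInv (alphaExt a) u⌋₊ := by
      exact_mod_cast h2
    linarith [Nat.floor_le hA]

variable {Ω : Type*} [MeasurableSpace Ω]

lemma phi_bounds (P : Measure Ω) [IsProbabilityMeasure P] (X : ℕ → Ω → ℝ)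
    (hmeas : ∀ i, Measurable (X i)) (hident : ∀ i, Measure.map (X i) P = Measure.map (X 0) P)
    (hmix : Tendsto (alphaCoef P X) atTop (nhds 0))
    (φ : ℝ → ℝ) (hφ : Measurable φ) (hφ1 : ∀ x, 1 ≤ φ x)
    (hint : Integrable (fun ω => φ (X 0 ω)) P)
    (f : ℝ → ℝ) (hf : Measurable f) (hf0 : ∀ x, 0 ≤ f x) (hfφ : ∀ x, f x ≤ φ x)
    (κ : ℝ) (hκ : 1 + ∫ ω, φ (X 0 ω) ∂P ≤ κ) (n : ℕ) (hn : 1 ≤ n) (Q A : ℝ → ℝ)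
    (hQ : Q = rcInv (fun x => 1 - distFun P (fun ω => φ (X 0 ω)) x))
    (hA : A = rcInv (alphaExt (alphaCoef P X))) :
    Integrable (fun u => bigPhi n (1 + A u) (Q u)) (volume.restrict (Ioo (0:ℝ) 1)) ∧
    n * P.real {ω | (n:ℝ) < φ (X 0 ω)} ≤ ∫ u in Ioo (0:ℝ) 1, bigPhi n (1 + A u) (Q u) ∧
    ∃ M : ℝ, 1 ≤ M ∧ M ≤ n ∧
      ∫ ω, max (min (φ (X 0 ω)) n - M) 0 ∂P ≤ ∫ u in Ioo (0:ℝ) 1, bigPhi n (1 + A u) (Q u) ∧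
      ∫ ω, hub ((∑ i ∈ Finset.range n, (min (f (X i ω)) M - ∫ ω, min (f (X 0 ω)) M ∂P)) / n) ∂P ≤
        (8 + 24 * κ ^ 2) * ∫ u in Ioo (0:ℝ) 1, bigPhi n (1 + A u) (Q u) := by
  have hnpos : (0:ℝ) < n := by exact_mod_cast hn
  set W : Ω → ℝ := fun ω => φ (X 0 ω) with hWdef
  have hW : Measurable W := hφ.comp (hmeas 0)
  have hW1 : ∀ ω, 1 ≤ W ω := fun ω => hφ1 _
  have hid : ProbabilityTheory.IdentDistrib Q W (volume.restrict (Ioo (0:ℝ) 1)) P := by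
    rw [hQ]; exact quant_ident P W hW fun ω => by linarith [hW1 ω]
  have hQ0 : ∀ u, 0 ≤ Q u := fun u => by rw [hQ]; exact rcInv_nonneg _ _
  have hA0 : ∀ u, 0 ≤ A u := fun u => by rw [hA]; exact rcInv_nonneg _ _
  have hQm := hid.aemeasurable_fst
  have hAm : AEMeasurable A (volume.restrict (Ioo (0:ℝ) 1)) := by
    refine aemeasurable_restrict_of_antitoneOn measurableSet_Ioo ?_
    rw [hA]
    exact fun y hy _ _ hyz => rcInv_anti _ _ _ hyz (alphaExt_bdd _ hmix y hy.1)
  have iQ : Integrable Q (volume.restrict (Ioo (0:ℝ) 1)) := hid.integrable_iff.mpr hint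
  have iΦ : Integrable (fun u => bigPhi n (1 + A u) (Q u)) (volume.restrict (Ioo (0:ℝ) 1)) := by
    have hmm : AEMeasurable (fun u => bigPhi n (1 + A u) (Q u)) (volume.restrict (Ioo (0:ℝ) 1)) :=
      (bigPhi_meas n).comp_aemeasurable ((hAm.const_add 1).prodMk hQm)
    refine Integrable.mono' ((integrable_const ((n:ℝ) + n)).add iQ) hmm.aestronglyMeasurable ?_
    refine Eventually.of_forall fun u => ?_
    rw [Real.norm_eq_abs, abs_of_nonneg (bigPhi_nonneg _ _ _ (by linarith [hA0 u]) (hQ0 u))]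
    exact bigPhi_le _ _ _ (by linarith [hA0 u]) (hQ0 u)
  have tr : ∀ G : ℝ → ℝ, Measurable G → ∫ ω, G (W ω) ∂P = ∫ u in Ioo (0:ℝ) 1, G (Q u) :=
    fun G hG => ((hid.comp hG).integral_eq).symm
  have hΦ1 : ∀ u, (if (n:ℝ) < Q u then (n:ℝ) else 0) ≤ bigPhi n (1 + A u) (Q u) := by
    intro u
    unfold bigPhi
    have h1 : (0:ℝ) ≤ min (Q u) n := le_min (hQ0 u) hnpos.le
    have h2 : 0 ≤ (if (n:ℝ) ≤ (1 + A u) * Q u then min (Q u) n else 0) := by split_ifs <;> simp [h1, hQ0]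
    have h3 : 0 ≤ (if (1 + A u) * Q u < n then Q u ^ 2 * (1 + A u) / n else 0) := by
      have := hA0 u
      split_ifs <;> positivity
    linarith
  have hΦ2 : ∀ u, (n:ℝ) ≤ (1 + A u) * Q u → min (Q u) n ≤ bigPhi n (1 + A u) (Q u) := by
    intro u hu
    unfold bigPhi
    rw [if_pos hu, if_neg (not_lt.mpr hu)]
    have : (0:ℝ) ≤ (if (n:ℝ) < Q u then (n:ℝ) else 0) := by split_ifs <;> simp
    linarith
  have hΦ3 : ∀ u, (1 + A u) * Q u < n → Q u ^ 2 * (1 + A u) / n ≤ bigPhi n (1 + A u) (Q u) := by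
    intro u hu
    unfold bigPhi
    rw [if_pos hu, if_neg (not_le.mpr hu)]
    have : (0:ℝ) ≤ (if (n:ℝ) < Q u then (n:ℝ) else 0) := by split_ifs <;> simp
    linarith
  refine ⟨iΦ, ?_, ?_⟩
  · have e : n * P.real {ω | (n:ℝ) < W ω} = ∫ ω, (if (n:ℝ) < W ω then (n:ℝ) else 0) ∂P := by
      have : ∀ ω, (if (n:ℝ) < W ω then (n:ℝ) else 0) = {ω | (n:ℝ) < W ω}.indicator (fun _ => (n:ℝ)) ω := by
        intro ω; simp [Set.indicator]
      simp_rw [this]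
      rw [integral_indicator (measurableSet_lt measurable_const hW)]
      simp [mul_comm]
    have hG : Measurable (fun t : ℝ => if (n:ℝ) < t then (n:ℝ) else 0) :=
      Measurable.ite (measurableSet_lt (by fun_prop) (by fun_prop)) (by fun_prop) (by fun_prop)
    rw [e, tr _ hG]
    refine integral_mono_of_nonneg (Eventually.of_forall fun u => ?_) iΦ (Eventually.of_forall hΦ1)
    dsimp only [Pi.zero_apply]; split_ifs <;> simp
  obtain ⟨q, M, hq1, hM1, hMn, hqM, s1, s2⟩ := select P W hW hW1 (alphaCoef P X) hmix
    (alphaCoef_le_one P X) n hn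
  rw [← hQ] at s1
  rw [← hQ, ← hA] at s2
  have hqpos : (0:ℝ) < q := by exact_mod_cast hq1
  refine ⟨M, hM1, hMn, ?_, ?_⟩
  · have hG : Measurable (fun t : ℝ => max (min t n - M) 0) := by fun_prop
    rw [tr _ hG]
    refine integral_mono_of_nonneg (Eventually.of_forall fun u => le_max_right _ _) iΦ ?_
    filter_upwards [ae_restrict_mem measurableSet_Ioo] with u hu
    have hΦ0 := bigPhi_nonneg n (1 + A u) (Q u) (by linarith [hA0 u]) (hQ0 u)
    refine max_le ?_ hΦ0
    rcases le_or_gt (min (Q u) n) M with h | h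
    · linarith
    · have h' := lt_min_iff.mp h
      have h2 := s2 u hu h'.1 h'.2
      have := hΦ2 u (by nlinarith [hQ0 u])
      linarith
  · -- core
    set ψ : ℝ → ℝ := fun x => min (φ x) M with hψ
    set α := alphaCoef P X with hα
    have hα0 : ∀ l, 0 ≤ α l := alphaCoef_nonneg P X
    have hα1 : ∀ l, α l ≤ 1 := alphaCoef_le_one P X
    set I : ℕ → ℝ := fun l => ∫ u in Ioo (0:ℝ) 1, (if u < α l then (min (Q u) M) ^ 2 else 0) with hI
    have hmQ : AEMeasurable (fun u => (min (Q u) M) ^ 2) (volume.restrict (Ioo (0:ℝ) 1)) :=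
      (hQm.min aemeasurable_const).pow_const 2
    have hbd : ∀ u, (min (Q u) M) ^ 2 ≤ M ^ 2 := fun u =>
      pow_le_pow_left₀ (le_min (hQ0 u) (by linarith)) (min_le_right _ _) 2
    have iI0 : Integrable (fun u => (min (Q u) M) ^ 2) (volume.restrict (Ioo (0:ℝ) 1)) :=
      Integrable.of_bound hmQ.aestronglyMeasurable (M ^ 2) (Eventually.of_forall fun u => by
        rw [Real.norm_eq_abs, abs_of_nonneg (by positivity)]; exact hbd u)
    have iI : ∀ l, Integrable (fun u => if u < α l then (min (Q u) M) ^ 2 else 0)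
        (volume.restrict (Ioo (0:ℝ) 1)) := fun l => by
      have := iI0.indicator (measurableSet_Iio (a := α l))
      refine this.congr (Eventually.of_forall fun u => ?_)
      simp [Set.indicator]
    have vol : ∀ l, ∀ r : ℝ, ∫ u in Ioo (0:ℝ) 1, (if u < α l then r else 0) = α l * r := by
      intro l r
      have : ∀ u, (if u < α l then r else 0) = (Iio (α l)).indicator (fun _ => r) u := by
        intro u; simp [Set.indicator]
      simp_rw [this]
      rw [integral_indicator measurableSet_Iio, Measure.restrict_restrict measurableSet_Iio]
      have e : Iio (α l) ∩ Ioo 0 1 = Ioo 0 (α l) := by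
        ext u; simp only [mem_inter_iff, mem_Iio, mem_Ioo]
        constructor
        · rintro ⟨h1, h2, h3⟩; exact ⟨h2, h1⟩
        · rintro ⟨h1, h2⟩; exact ⟨h2, h1, h2.trans_le (hα1 l)⟩
      rw [e]
      simp [Measure.real, hα0 l]
    have iconst : ∀ l, ∀ r : ℝ, Integrable (fun u => if u < α l then r else 0)
        (volume.restrict (Ioo (0:ℝ) 1)) := by
      intro l r
      refine ((integrable_const r).indicator (measurableSet_Iio (a := α l))).congr
        (Eventually.of_forall fun u => ?_)
      simp [Set.indicator]
    have hc : ∀ l, ∃ c : ℝ, 0 ≤ c ∧ c ^ 2 * α l ≤ I l ∧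
        ∫ ω, (if c < ψ (X 0 ω) then ψ (X 0 ω) ^ 2 else 0) ∂P ≤ I l := by
      intro l
      rcases (hα0 l).eq_or_lt with h0 | h0
      · have hI0 : 0 ≤ I l := integral_nonneg fun u => by dsimp only [Pi.zero_apply]; split_ifs <;> positivity
        refine ⟨M, by linarith, by rw [← h0, mul_zero]; exact hI0, ?_⟩
        have : ∀ ω, ¬ (M < ψ (X 0 ω)) := fun ω => not_lt.mpr (min_le_right _ _)
        simp only [this, if_false, integral_zero]; exact hI0
      · set c := min (Q (α l)) M with hcdef
        have hc0 : 0 ≤ c := le_min (hQ0 _) (by linarith)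
        have hanti : ∀ u ∈ Ioo (0:ℝ) 1, ∀ v, u ≤ v → Q v ≤ Q u := by
          intro u hu v huv
          rw [hQ]; exact rcInv_anti _ _ _ huv (quant_bdd P W hW u hu.1)
        refine ⟨c, hc0, ?_, ?_⟩
        · rw [mul_comm, ← vol l]
          refine integral_mono_ae (iconst l _) (iI l) ?_
          filter_upwards [ae_restrict_mem measurableSet_Ioo] with u hu
          split_ifs with h
          · exact pow_le_pow_left₀ hc0 (min_le_min_right _ (hanti u hu _ h.le)) 2
          · exact le_rfl
        · have hG : Measurable (fun t : ℝ => if c < min t M then (min t M) ^ 2 else 0) :=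
            Measurable.ite (measurableSet_lt (by fun_prop) (by fun_prop)) (by fun_prop) (by fun_prop)
          have e := tr _ hG
          have e' : ∫ ω, (if c < ψ (X 0 ω) then ψ (X 0 ω) ^ 2 else 0) ∂P =
            ∫ u in Ioo (0:ℝ) 1, (if c < min (Q u) M then (min (Q u) M) ^ 2 else 0) := e
          rw [e']
          refine integral_mono_of_nonneg (Eventually.of_forall fun u => ?_) (iI l) ?_
          · dsimp only [Pi.zero_apply]; split_ifs <;> positivity
          filter_upwards [ae_restrict_mem measurableSet_Ioo] with u hu
          split_ifs with h1 h2 h2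
          · exact le_rfl
          · exfalso
            push Not at h2
            have hle : Q u ≤ Q (α l) := by
              rcases lt_or_ge (α l) 1 with h3 | h3
              · exact hanti (α l) ⟨h0, h3⟩ u h2
              · linarith [hu.2]
            exact absurd h1 (not_lt.mpr (min_le_min_right _ hle))
          · positivity
          · exact le_rfl
    choose c hc0 hc1 hc2 using hc
    have hψm : Measurable ψ := hφ.min measurable_const
    have hψint : ∫ ω, ψ (X 0 ω) ∂P ≤ ∫ ω, φ (X 0 ω) ∂P := by
      refine integral_mono_of_nonneg (Eventually.of_forall fun ω => ?_) hint
        (Eventually.of_forall fun ω => min_le_left _ _)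
      show (0:ℝ) ≤ min (φ (X 0 ω)) M
      exact le_min (by linarith [hφ1 (X 0 ω)]) (by linarith)
    have k := core P X hmeas hident (fun x => min (f x) M) ψ (hf.min measurable_const) hψm M
      (fun x => le_min (hφ1 x) hM1) (fun x => min_le_right _ _)
      (fun x => le_min (hf0 x) (by linarith)) (fun x => min_le_min_right _ (hfφ x)) κ
      (by linarith) n q hn hq1 c hc0
    refine k.trans ?_
    set N : ℝ → ℝ := fun u => 1 + ∑ l ∈ Finset.Ico 1 q, (if u < α l then (1:ℝ) else 0) with hN
    have eψ : ∫ ω, ψ (X 0 ω) ^ 2 ∂P = ∫ u in Ioo (0:ℝ) 1, (min (Q u) M) ^ 2 :=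
      tr (fun t => (min t M) ^ 2) (by fun_prop)
    have eN : (∫ u in Ioo (0:ℝ) 1, (min (Q u) M) ^ 2) + ∑ l ∈ Finset.Ico 1 q, I l
        = ∫ u in Ioo (0:ℝ) 1, (min (Q u) M) ^ 2 * N u := by
      simp only [hI]
      rw [← integral_finsetSum _ fun l _ => iI l, ← integral_add iI0 (integrable_finsetSum _ fun l _ => iI l)]
      refine integral_congr_ae (Eventually.of_forall fun u => ?_)
      simp only [hN]
      rw [mul_add, mul_one, Finset.mul_sum]
      congr 1
      refine Finset.sum_congr rfl fun l _ => ?_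
      split_ifs <;> simp
    have b1 : ∫ ω, ψ (X 0 ω) ^ 2 ∂P + ∑ l ∈ Finset.Ico 1 q, (4 * c l ^ 2 * α l
          + 8 * ∫ ω, (if c l < ψ (X 0 ω) then ψ (X 0 ω) ^ 2 else 0) ∂P)
        ≤ 12 * ∫ u in Ioo (0:ℝ) 1, (min (Q u) M) ^ 2 * N u := by
      rw [← eN, eψ, mul_add, Finset.mul_sum]
      refine add_le_add ?_ (Finset.sum_le_sum fun l _ => ?_)
      · have : 0 ≤ ∫ u in Ioo (0:ℝ) 1, (min (Q u) M) ^ 2 := integral_nonneg fun u => by positivity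
        linarith
      · linarith [hc1 l, hc2 l]
    have b2 : 1 / (n:ℝ) * ∫ u in Ioo (0:ℝ) 1, (min (Q u) M) ^ 2 * N u ≤
        2 * ∫ u in Ioo (0:ℝ) 1, bigPhi n (1 + A u) (Q u) := by
      rw [← integral_const_mul, ← integral_const_mul]
      refine integral_mono_of_nonneg (Eventually.of_forall fun u => ?_) (iΦ.const_mul 2) ?_
      · have : 0 ≤ N u := add_nonneg zero_le_one (Finset.sum_nonneg fun l _ => by split_ifs <;> simp)
        dsimp only [Pi.zero_apply]; positivity
      filter_upwards [ae_restrict_mem measurableSet_Ioo] with u hu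
      obtain ⟨n1, n2⟩ := card_lag α hmix q hq1 u hu.1
      rw [← hA] at n2
      have hN0 : 0 ≤ N u := add_nonneg zero_le_one (Finset.sum_nonneg fun l _ => by split_ifs <;> simp)
      have hw0 : 0 ≤ min (Q u) M := le_min (hQ0 u) (by linarith)
      have hwM : min (Q u) M ≤ M := min_le_right _ _
      have hwQ : min (Q u) M ≤ Q u := min_le_left _ _
      have hΦ0 := bigPhi_nonneg n (1 + A u) (Q u) (by linarith [hA0 u]) (hQ0 u)
      rcases le_or_gt (n:ℝ) ((1 + A u) * Q u) with h | h
      · have h2 := hΦ2 u h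
        have h3 : min (Q u) M ≤ min (Q u) n := min_le_min_left _ hMn
        have h4 : min (Q u) M ^ 2 * N u ≤ min (Q u) M * (2 * n) := by
          calc min (Q u) M ^ 2 * N u = min (Q u) M * (min (Q u) M * N u) := by ring
            _ ≤ min (Q u) M * (M * q) := by gcongr
            _ ≤ min (Q u) M * (2 * n) := mul_le_mul_of_nonneg_left (by linarith) hw0
        calc 1 / (n:ℝ) * (min (Q u) M ^ 2 * N u) ≤ 1 / (n:ℝ) * (min (Q u) M * (2 * n)) := by gcongr
          _ = 2 * min (Q u) M := by field_simp
          _ ≤ 2 * bigPhi n (1 + A u) (Q u) := by linarith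
      · have h2 := hΦ3 u h
        calc 1 / (n:ℝ) * (min (Q u) M ^ 2 * N u) ≤ 1 / (n:ℝ) * (Q u ^ 2 * (1 + A u)) := by
              gcongr
          _ = Q u ^ 2 * (1 + A u) / n := by ring
          _ ≤ 2 * bigPhi n (1 + A u) (Q u) := by linarith
    have b3 : M * α q ≤ 2 * ∫ u in Ioo (0:ℝ) 1, bigPhi n (1 + A u) (Q u) := by
      rw [mul_comm, ← vol q, ← integral_const_mul]
      refine integral_mono_ae (iconst q M) (iΦ.const_mul 2) ?_
      filter_upwards [ae_restrict_mem measurableSet_Ioo] with u hu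
      have hΦ0 := bigPhi_nonneg n (1 + A u) (Q u) (by linarith [hA0 u]) (hQ0 u)
      split_ifs with h
      · have h1 := s1 u hu h
        have h2 := le_rcInv_alpha α hmix u hu.1 q hq1 h
        rw [← hA] at h2
        rw [div_le_iff₀ hqpos] at h1
        have h3 : (n:ℝ) ≤ (1 + A u) * Q u := by nlinarith [hQ0 u]
        have h4 := hΦ2 u h3
        have h5 : M ≤ 2 * Q u := by
          by_contra hcon
          push Not at hcon
          nlinarith
        have h6 : M ≤ 2 * min (Q u) n := by
          rcases min_choice (Q u) (n:ℝ) with e | e <;> rw [e] <;> linarith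
        linarith
      · linarith
    have b4 : κ ^ 2 / n * (∫ ω, ψ (X 0 ω) ^ 2 ∂P + ∑ l ∈ Finset.Ico 1 q, (4 * c l ^ 2 * α l
          + 8 * ∫ ω, (if c l < ψ (X 0 ω) then ψ (X 0 ω) ^ 2 else 0) ∂P))
        ≤ 24 * κ ^ 2 * ∫ u in Ioo (0:ℝ) 1, bigPhi n (1 + A u) (Q u) := by
      calc _ ≤ κ ^ 2 / n * (12 * ∫ u in Ioo (0:ℝ) 1, (min (Q u) M) ^ 2 * N u) := by gcongr
        _ = 12 * κ ^ 2 * (1 / (n:ℝ) * ∫ u in Ioo (0:ℝ) 1, (min (Q u) M) ^ 2 * N u) := by ring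
        _ ≤ 12 * κ ^ 2 * (2 * ∫ u in Ioo (0:ℝ) 1, bigPhi n (1 + A u) (Q u)) := by gcongr
        _ = _ := by ring
    linarith

end PhiBounds

section Summation

lemma geo1 (c : ℝ) (hc : 1 < c) (x : ℝ) (hx : 0 ≤ x) (J : ℕ) :
    ∑ j ∈ Finset.range J, (if c ^ j ≤ x then c ^ j else 0) ≤ min (c ^ J) (c * x) / (c - 1) := by
  have h1 : 0 < c - 1 := by linarith
  induction J with
  | zero => simp only [Finset.range_zero, Finset.sum_empty]; positivity
  | succ J ih =>
    rw [Finset.sum_range_succ]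
    have hp : 0 < c ^ J := by positivity
    split_ifs with h
    · rw [le_div_iff₀ h1] at ih ⊢
      have h2 := ih.trans (min_le_left _ _)
      refine le_min ?_ ?_ <;> [rw [pow_succ]; skip] <;> nlinarith
    · rw [add_zero]
      refine ih.trans ?_
      gcongr
      · exact hc.le
      · omega

lemma geo2 (c : ℝ) (hc : 1 < c) (y : ℝ) (hy : 0 < y) (J : ℕ) :
    ∑ j ∈ Finset.range J, (if y ≤ c ^ j then (c ^ j)⁻¹ else 0)
      ≤ c / (c - 1) * (y⁻¹ - min y⁻¹ (c ^ J)⁻¹) := by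
  have h1 : 0 < c - 1 := by linarith
  have hcc : 0 ≤ c / (c - 1) := by positivity
  induction J with
  | zero =>
    simp only [Finset.range_zero, Finset.sum_empty]
    exact mul_nonneg hcc (sub_nonneg.mpr (min_le_left _ _))
  | succ J ih =>
    rw [Finset.sum_range_succ]
    have hp : 0 < c ^ J := by positivity
    have hpp : (c ^ (J+1))⁻¹ ≤ (c ^ J)⁻¹ := by
      apply inv_anti₀ hp
      rw [pow_succ]; nlinarith
    split_ifs with h
    · have h2 : (c ^ J)⁻¹ ≤ y⁻¹ := inv_anti₀ hy h
      rw [min_eq_right h2] at ih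
      rw [min_eq_right (hpp.trans h2)]
      have e : c / (c - 1) * ((c ^ J)⁻¹ - (c ^ (J+1))⁻¹) = (c ^ J)⁻¹ := by
        rw [pow_succ]; field_simp
      have e2 : c / (c - 1) * (y⁻¹ - (c ^ (J+1))⁻¹) =
        c / (c - 1) * (y⁻¹ - (c ^ J)⁻¹) + c / (c - 1) * ((c ^ J)⁻¹ - (c ^ (J+1))⁻¹) := by ring
      rw [e2, e]; linarith
    · rw [add_zero]
      refine ih.trans ?_
      gcongr

lemma geo3 (c : ℝ) (hc : 1 < c) (x y : ℝ) (hx : 0 < x) (hxy : x ≤ y) (J : ℕ) :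
    ∑ j ∈ Finset.range J, (if x < c ^ j ∧ c ^ j ≤ y then Real.log c else 0)
      ≤ max 0 (min (J * Real.log c) (Real.log y + Real.log c) - Real.log x) := by
  have hl : 0 < Real.log c := Real.log_pos hc
  induction J with
  | zero => simp
  | succ J ih =>
    rw [Finset.sum_range_succ]
    have hp : 0 < c ^ J := by positivity
    push_cast
    split_ifs with h
    · have h1 : Real.log x < J * Real.log c := by
        rw [← Real.log_pow]; exact Real.log_lt_log hx h.1
      have h2 : J * Real.log c ≤ Real.log y := by
        rw [← Real.log_pow]; exact Real.log_le_log hp h.2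
      rw [min_eq_left (by linarith), max_eq_right (by linarith)] at ih
      rw [min_eq_left (by linarith), max_eq_right (by linarith)]
      linarith
    · rw [add_zero]
      refine ih.trans ?_
      gcongr
      linarith

lemma sum_bigPhi (c : ℝ) (hc : 1 < c) : ∃ C : ℝ, 0 ≤ C ∧ ∀ (b t : ℝ), 1 ≤ b → 1 ≤ t → ∀ J : ℕ,
    ∑ j ∈ Finset.range J, bigPhi ⌊c ^ j⌋₊ b t ≤ C * (t * (1 + Real.log b)) := by
  have hl : 0 < Real.log c := Real.log_pos hc
  have h1 : 0 < c - 1 := by linarith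
  have hl2 : 0 < Real.log 2 := Real.log_pos (by norm_num)
  refine ⟨5 * (c / (c - 1)) + 1 + (Real.log 2 + 1) / Real.log c, by positivity, fun b t hb ht J => ?_⟩
  have hlb : 0 ≤ Real.log b := Real.log_nonneg hb
  have hcc : 0 < c / (c - 1) := by positivity
  have key : ∀ j : ℕ, bigPhi ⌊c ^ j⌋₊ b t ≤ (if c ^ j ≤ 2 * t then c ^ j else 0) +
      (if c ^ j ≤ t then c ^ j else 0) +
      (t / Real.log c) * (if t < c ^ j ∧ c ^ j ≤ 2 * b * t then Real.log c else 0) +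
      (2 * t ^ 2 * b) * (if b * t ≤ c ^ j then (c ^ j)⁻¹ else 0) := by
    intro j
    have hp : 1 ≤ c ^ j := one_le_pow₀ hc.le
    have hn1 : (⌊c ^ j⌋₊ : ℝ) ≤ c ^ j := Nat.floor_le (by linarith)
    have hn2 : c ^ j < ⌊c ^ j⌋₊ + 1 := Nat.lt_floor_add_one _
    have hn3 : (1:ℝ) ≤ ⌊c ^ j⌋₊ := by
      have : 1 ≤ ⌊c ^ j⌋₊ := Nat.le_floor (by simpa using hp)
      exact_mod_cast this
    set n : ℝ := (⌊c ^ j⌋₊ : ℝ) with hn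
    unfold bigPhi
    rw [← hn]
    have p1 : (if n < t then n else 0) ≤ (if c ^ j ≤ 2 * t then c ^ j else 0) := by
      split_ifs with a1 a2 a2
      · exact hn1
      · exfalso; linarith
      · linarith
      · exact le_rfl
    have p2 : (if n ≤ b * t then min t n else 0) ≤ (if c ^ j ≤ t then c ^ j else 0) +
      (t / Real.log c) * (if t < c ^ j ∧ c ^ j ≤ 2 * b * t then Real.log c else 0) := by
      split_ifs with a1 a2 a3 a4 a5 a6 a7
      · linarith [a3.1]
      · rw [mul_zero, add_zero]; exact (min_le_right _ _).trans hn1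
      · rw [div_mul_cancel₀ _ hl.ne', zero_add]; exact min_le_left _ _
      · exfalso; apply a4; constructor
        · linarith
        · linarith
      all_goals first | positivity | simp
    have p3 : (if b * t < n then t ^ 2 * b / n else 0) ≤
      (2 * t ^ 2 * b) * (if b * t ≤ c ^ j then (c ^ j)⁻¹ else 0) := by
      split_ifs with a1 a2 a2
      · rw [div_le_iff₀ (by linarith)]
        have : 1 ≤ 2 * ((c ^ j)⁻¹ * n) := by
          rw [inv_mul_eq_div, ← mul_div_assoc, le_div_iff₀ (by linarith)]; linarith
        have h3 : 0 ≤ t ^ 2 * b := by positivity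
        nlinarith
      · exfalso; linarith
      · positivity
      · simp
    linarith
  refine (Finset.sum_le_sum fun j _ => key j).trans ?_
  rw [Finset.sum_add_distrib, Finset.sum_add_distrib, Finset.sum_add_distrib, ← Finset.mul_sum, ← Finset.mul_sum]
  have g1 := geo1 c hc (2 * t) (by linarith) J
  have g1' := geo1 c hc t (by linarith) J
  have g2 := geo2 c hc (b * t) (by positivity) J
  have g3 := geo3 c hc t (2 * b * t) (by linarith) (by nlinarith) J
  have q1 : ∀ x : ℝ, min (c ^ J) (c * x) / (c - 1) ≤ c / (c - 1) * x := fun x => by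
    rw [div_mul_eq_mul_div]; gcongr; exact min_le_right _ _
  have q2 : c / (c - 1) * ((b * t)⁻¹ - min (b * t)⁻¹ (c ^ J)⁻¹) ≤ c / (c - 1) * (b * t)⁻¹ := by
    have : 0 ≤ min (b * t)⁻¹ (c ^ J)⁻¹ := by positivity
    gcongr; linarith
  have q3 : max 0 (min (J * Real.log c) (Real.log (2 * b * t) + Real.log c) - Real.log t)
      ≤ Real.log 2 + Real.log b + Real.log c := by
    rw [Real.log_mul (by positivity) (by positivity), Real.log_mul (by norm_num) (by positivity)]
    refine max_le (by positivity) ?_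
    have := min_le_right (J * Real.log c) (Real.log 2 + Real.log b + Real.log t + Real.log c)
    linarith
  calc _ ≤ c / (c - 1) * (2 * t) + c / (c - 1) * t + t / Real.log c * (Real.log 2 + Real.log b + Real.log c)
        + 2 * t ^ 2 * b * (c / (c - 1) * (b * t)⁻¹) := by
        refine add_le_add (add_le_add (add_le_add (g1.trans (q1 _)) (g1'.trans (q1 _))) ?_) ?_
        · exact mul_le_mul_of_nonneg_left (g3.trans q3) (by positivity)
        · exact mul_le_mul_of_nonneg_left (g2.trans q2) (by positivity)
    _ = t * (5 * (c / (c - 1)) + 1 + (Real.log 2 + Real.log b) / Real.log c) := by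
        field_simp; ring
    _ ≤ t * ((5 * (c / (c - 1)) + 1 + (Real.log 2 + 1) / Real.log c) * (1 + Real.log b)) := by
        refine mul_le_mul_of_nonneg_left ?_ (by linarith)
        have r1 : (Real.log 2 + Real.log b) / Real.log c ≤ (Real.log 2 + 1) / Real.log c * (1 + Real.log b) := by
          rw [div_mul_eq_mul_div]; gcongr; nlinarith
        have r2 : 0 ≤ (5 * (c / (c - 1)) + 1) * Real.log b := by positivity
        nlinarith
    _ = _ := by ring

end Summation

section SLLN

variable {Ω : Type*} [MeasurableSpace Ω]

lemma ae_tendsto_zero_of_summable (P : Measure Ω) (W : ℕ → Ω → ℝ)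
    (hi : ∀ j, Integrable (W j) P) (h0 : ∀ j ω, 0 ≤ W j ω) (e : ℕ → ℝ) (he : Summable e)
    (hle : ∀ j, ∫ ω, W j ω ∂P ≤ e j) :
    ∀ᵐ ω ∂P, Tendsto (fun j => W j ω) atTop (nhds 0) := by
  have hn0 : ∀ j, 0 ≤ ∫ ω, W j ω ∂P := fun j => integral_nonneg (h0 j)
  have hs : Summable fun j => ∫ ω, W j ω ∂P := Summable.of_nonneg_of_le hn0 hle he
  have hm : ∀ j, AEMeasurable (fun ω => ENNReal.ofReal (W j ω)) P := fun j => (hi j).aemeasurable.ennreal_ofReal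
  have hlin : ∫⁻ ω, ∑' j, ENNReal.ofReal (W j ω) ∂P ≠ ⊤ := by
    rw [lintegral_tsum hm]
    have : ∀ j, ∫⁻ ω, ENNReal.ofReal (W j ω) ∂P = ENNReal.ofReal (∫ ω, W j ω ∂P) := fun j =>
      (ofReal_integral_eq_lintegral_ofReal (hi j) (Eventually.of_forall (h0 j))).symm
    simp_rw [this]
    rw [← ENNReal.ofReal_tsum_of_nonneg hn0 hs]
    exact ENNReal.ofReal_ne_top
  filter_upwards [ae_lt_top' (AEMeasurable.tsum hm) hlin] with ω hω
  have h1 := ENNReal.tendsto_atTop_zero_of_tsum_ne_top hω.ne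
  have h2 := (ENNReal.tendsto_toReal ENNReal.zero_ne_top).comp h1
  simpa [Function.comp_def, ENNReal.toReal_ofReal (h0 _ ω)] using h2

lemma summable_phi (P : Measure Ω) [IsProbabilityMeasure P] (W : Ω → ℝ) (hW : Measurable W)
    (hW1 : ∀ ω, 1 ≤ W ω) (hint : Integrable W P) (a : ℕ → ℝ) (ha : Tendsto a atTop (nhds 0))
    (Q A : ℝ → ℝ) (hQ : Q = rcInv (fun x => 1 - distFun P W x)) (hA : A = rcInv (alphaExt a))
    (hcond : IntegrableOn (fun s => Real.log (1 + A (s / 2)) * Q s) (Ioo (0:ℝ) 1))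
    (c : ℝ) (hc : 1 < c)
    (hiΦ : ∀ j : ℕ, Integrable (fun u => bigPhi ⌊c ^ j⌋₊ (1 + A u) (Q u)) (volume.restrict (Ioo (0:ℝ) 1))) :
    Summable fun j : ℕ => ∫ u in Ioo (0:ℝ) 1, bigPhi ⌊c ^ j⌋₊ (1 + A u) (Q u) := by
  have hid : ProbabilityTheory.IdentDistrib Q W (volume.restrict (Ioo (0:ℝ) 1)) P := by
    rw [hQ]; exact quant_ident P W hW fun ω => by linarith [hW1 ω]
  have hQ0 : ∀ u, 0 ≤ Q u := fun u => by rw [hQ]; exact rcInv_nonneg _ _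
  have hA0 : ∀ u, 0 ≤ A u := fun u => by rw [hA]; exact rcInv_nonneg _ _
  have hQ1 : ∀ u ∈ Ioo (0:ℝ) 1, 1 ≤ Q u := by
    intro u hu
    refine le_of_forall_lt fun x hx => ?_
    rcases lt_or_ge x 0 with h0 | h0
    · exact h0.trans_le (hQ0 u)
    · rw [hQ, quant_lt P W hW u hu.1 x h0]
      have : {ω | x < W ω} = univ := by
        ext ω; simpa using lt_of_lt_of_le hx (hW1 ω)
      rw [this, probReal_univ]; exact hu.2
  have hQm := hid.aemeasurable_fst
  have hAm : AEMeasurable A (volume.restrict (Ioo (0:ℝ) 1)) := by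
    refine aemeasurable_restrict_of_antitoneOn measurableSet_Ioo ?_
    rw [hA]
    exact fun y hy _ _ hyz => rcInv_anti _ _ _ hyz (alphaExt_bdd _ ha y hy.1)
  have iQ : Integrable Q (volume.restrict (Ioo (0:ℝ) 1)) := hid.integrable_iff.mpr hint
  obtain ⟨C, hC0, hC⟩ := sum_bigPhi c hc
  have iQA : Integrable (fun u => Q u * (1 + Real.log (1 + A u))) (volume.restrict (Ioo (0:ℝ) 1)) := by
    refine Integrable.mono' (iQ.add hcond) ?_ ?_
    · exact (hQm.mul ((Real.measurable_log.comp_aemeasurable (hAm.const_add 1)).const_add 1)).aestronglyMeasurable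
    · filter_upwards [ae_restrict_mem measurableSet_Ioo] with u hu
      have h1 : 0 ≤ Real.log (1 + A u) := Real.log_nonneg (by linarith [hA0 u])
      have h2 : A u ≤ A (u / 2) := by
        rw [hA]
        exact rcInv_anti _ _ _ (by linarith [hu.1]) (alphaExt_bdd _ ha _ (by linarith [hu.1]))
      have h3 : Real.log (1 + A u) ≤ Real.log (1 + A (u / 2)) :=
        Real.log_le_log (by linarith [hA0 u]) (by linarith)
      rw [Real.norm_eq_abs, abs_of_nonneg (mul_nonneg (hQ0 u) (by linarith))]
      simp only [Pi.add_apply]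
      nlinarith [hQ0 u]
  refine summable_of_sum_range_le (c := C * ∫ u in Ioo (0:ℝ) 1, Q u * (1 + Real.log (1 + A u)))
    (fun j => integral_nonneg fun u => bigPhi_nonneg _ _ _ (by linarith [hA0 u]) (hQ0 u)) fun J => ?_
  rw [← integral_finsetSum _ fun j _ => hiΦ j, ← integral_const_mul]
  refine integral_mono_ae (integrable_finsetSum _ fun j _ => hiΦ j) (iQA.const_mul C) ?_
  filter_upwards [ae_restrict_mem measurableSet_Ioo] with u hu
  exact hC _ _ (by linarith [hA0 u]) (hQ1 u hu) J

lemma slln_sub (P : Measure Ω) [IsProbabilityMeasure P] (X : ℕ → Ω → ℝ)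
    (hmeas : ∀ i, Measurable (X i)) (hident : ∀ i, Measure.map (X i) P = Measure.map (X 0) P)
    (hmix : Tendsto (alphaCoef P X) atTop (nhds 0))
    (φ : ℝ → ℝ) (hφ : Measurable φ) (hφ1 : ∀ x, 1 ≤ φ x)
    (hint : Integrable (fun ω => φ (X 0 ω)) P)
    (hcond : IntegrableOn
      (fun s => Real.log (1 + rcInv (alphaExt (alphaCoef P X)) (s / 2)) *
        rcInv (fun x => 1 - distFun P (fun ω => φ (X 0 ω)) x) s)
      (Set.Ioo (0 : ℝ) 1))
    (f : ℝ → ℝ) (hf : Measurable f) (hf0 : ∀ x, 0 ≤ f x) (hfφ : ∀ x, f x ≤ φ x)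
    (c : ℝ) (hc : 1 < c) :
    ∀ᵐ ω ∂P, Tendsto (fun j : ℕ => (∑ i ∈ Finset.range ⌊c ^ j⌋₊, f (X i ω)) / ⌊c ^ j⌋₊) atTop
      (nhds (∫ ω, f (X 0 ω) ∂P)) := by
  set κ := 1 + ∫ ω, φ (X 0 ω) ∂P with hκ
  set Q := rcInv (fun x => 1 - distFun P (fun ω => φ (X 0 ω)) x) with hQ
  set A := rcInv (alphaExt (alphaCoef P X)) with hA
  have hn1 : ∀ j : ℕ, 1 ≤ ⌊c ^ j⌋₊ := fun j => Nat.le_floor (by simpa using one_le_pow₀ hc.le)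
  set N : ℕ → ℕ := fun j => ⌊c ^ j⌋₊ with hN
  have hNpos : ∀ j, (0:ℝ) < N j := fun j => by exact_mod_cast hn1 j
  have hNtop : Tendsto N atTop atTop :=
    tendsto_nat_floor_atTop.comp (tendsto_pow_atTop_atTop_of_one_lt hc)
  have pb := fun j => phi_bounds P X hmeas hident hmix φ hφ hφ1 hint f hf hf0 hfφ κ le_rfl
    (N j) (hn1 j) Q A hQ hA
  choose hiΦ hB M hM1 hMn hR hH using pb
  set I : ℕ → ℝ := fun j => ∫ u in Ioo (0:ℝ) 1, bigPhi (N j) (1 + A u) (Q u) with hI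
  have hsum : Summable I := summable_phi P (fun ω => φ (X 0 ω)) (hφ.comp (hmeas 0)) (fun ω => hφ1 _) hint
    (alphaCoef P X) hmix Q A hQ hA hcond c hc hiΦ
  have hidd : ∀ i, ProbabilityTheory.IdentDistrib (X i) (X 0) P P := fun i =>
    ⟨(hmeas i).aemeasurable, (hmeas 0).aemeasurable, hident i⟩
  have tr : ∀ (G : ℝ → ℝ), Measurable G → ∀ i, ∫ ω, G (X i ω) ∂P = ∫ ω, G (X 0 ω) ∂P := fun G hG i =>
    ((hidd i).comp hG).integral_eq
  have hintf : Integrable (fun ω => f (X 0 ω)) P :=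
    Integrable.mono' hint (hf.comp (hmeas 0)).aestronglyMeasurable (Eventually.of_forall fun ω => by
      rw [Real.norm_eq_abs, abs_of_nonneg (hf0 _)]; exact hfφ _)
  -- the bounded pieces are integrable
  have ibd : ∀ (G : ℝ → ℝ) (b : ℝ), Measurable G → (∀ x, |G x| ≤ b) → ∀ i, Integrable (fun ω => G (X i ω)) P :=
    fun G b hG hb i => Integrable.of_bound (hG.comp (hmeas i)).aestronglyMeasurable b
      (Eventually.of_forall fun ω => hb _)
  have iT : ∀ j i, Integrable (fun ω => min (f (X i ω)) (M j)) P := fun j i =>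
    ibd (fun x => min (f x) (M j)) (M j) (hf.min measurable_const) (fun x => by
      rw [abs_of_nonneg (le_min (hf0 x) (by linarith [hM1 j]))]; exact min_le_right _ _) i
  set T : ℕ → Ω → ℝ := fun j ω => (∑ i ∈ Finset.range (N j), (min (f (X i ω)) (M j) -
    ∫ ω, min (f (X 0 ω)) (M j) ∂P)) / N j with hT
  have iTT : ∀ j, Integrable (T j) P := fun j =>
    (integrable_finsetSum _ fun i _ => (iT j i).sub (integrable_const _)).div_const _
  have iH : ∀ j, Integrable (fun ω => hub (T j ω)) P := fun j =>
    Integrable.mono' (iTT j).abs (hub_meas.comp_aemeasurable (iTT j).aemeasurable).aestronglyMeasurable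
      (Eventually.of_forall fun ω => by
        rw [Real.norm_eq_abs, abs_of_nonneg (hub_nonneg _)]; exact hub_le _)
  have aH := ae_tendsto_zero_of_summable P (fun j ω => hub (T j ω)) iH (fun j ω => hub_nonneg _)
    (fun j => (8 + 24 * κ ^ 2) * I j) (hsum.mul_left _) hH
  have hgm : ∀ j, Measurable (fun x => max (min (φ x) (N j) - M j) 0) := fun j =>
    ((hφ.min measurable_const).sub measurable_const).max measurable_const
  have iR0 : ∀ j i, Integrable (fun ω => max (min (φ (X i ω)) (N j) - M j) 0) P := fun j i =>
    ibd (fun x => max (min (φ x) (N j) - M j) 0) (N j) (hgm j) (fun x => by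
      rw [abs_of_nonneg (le_max_right _ _)]
      refine max_le ?_ (hNpos j).le
      have := min_le_right (φ x) (N j : ℝ)
      linarith [hM1 j]) i
  set R : ℕ → Ω → ℝ := fun j ω => (∑ i ∈ Finset.range (N j), max (min (φ (X i ω)) (N j) - M j) 0) / N j with hRdef
  have aR := ae_tendsto_zero_of_summable P R
    (fun j => (integrable_finsetSum _ fun i _ => iR0 j i).div_const _)
    (fun j ω => div_nonneg (Finset.sum_nonneg fun i _ => le_max_right _ _) (hNpos j).le)
    I hsum (fun j => by
      simp only [hRdef]
      rw [integral_div, integral_finsetSum _ fun i _ => iR0 j i]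
      rw [Finset.sum_congr rfl fun i _ => tr _ (hgm j) i]
      rw [Finset.sum_const, Finset.card_range, nsmul_eq_mul, mul_div_assoc, mul_div_cancel₀ _ (hNpos j).ne']
      exact hR j)
  have hbm : ∀ j, Measurable (fun x => if (N j : ℝ) < φ x then (1:ℝ) else 0) := fun j =>
    Measurable.ite (measurableSet_lt measurable_const hφ) measurable_const measurable_const
  have iB0 : ∀ j i, Integrable (fun ω => if (N j : ℝ) < φ (X i ω) then (1:ℝ) else 0) P := fun j i =>
    ibd (fun x => if (N j : ℝ) < φ x then (1:ℝ) else 0) 1 (hbm j) (fun x => by split_ifs <;> simp) i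
  have aB := ae_tendsto_zero_of_summable P
    (fun j ω => ∑ i ∈ Finset.range (N j), if (N j : ℝ) < φ (X i ω) then (1:ℝ) else 0)
    (fun j => integrable_finsetSum _ fun i _ => iB0 j i)
    (fun j ω => Finset.sum_nonneg fun i _ => by split_ifs <;> simp)
    I hsum (fun j => by
      rw [integral_finsetSum _ fun i _ => iB0 j i]
      rw [Finset.sum_congr rfl fun i _ => tr _ (hbm j) i]
      rw [Finset.sum_const, Finset.card_range, nsmul_eq_mul]
      have e : ∫ ω, (if (N j:ℝ) < φ (X 0 ω) then (1:ℝ) else 0) ∂P = P.real {ω | (N j:ℝ) < φ (X 0 ω)} := by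
        have : ∀ ω, (if (N j:ℝ) < φ (X 0 ω) then (1:ℝ) else 0)
            = {ω | (N j:ℝ) < φ (X 0 ω)}.indicator (fun _ => (1:ℝ)) ω := by
          intro ω; simp [Set.indicator]
        simp_rw [this]
        have hms : MeasurableSet {ω | (N j:ℝ) < φ (X 0 ω)} :=
          measurableSet_lt measurable_const (hφ.comp (hmeas 0))
        rw [integral_indicator hms]
        simp
      rw [e]; exact hB j)
  -- deterministic remainder
  set d : ℕ → ℝ := fun j => ∫ ω, f (X 0 ω) ∂P - ∫ ω, min (f (X 0 ω)) (M j) ∂P with hd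
  have hdlim : Tendsto d atTop (nhds 0) := by
    have iE : ∀ j, Integrable (fun ω => max (φ (X 0 ω) - N j) 0) P := fun j =>
      (hint.sub (integrable_const _)).sup (integrable_const 0)
    have hE : Tendsto (fun j => ∫ ω, max (φ (X 0 ω) - N j) 0 ∂P) atTop (nhds 0) := by
      have := tendsto_integral_of_dominated_convergence (μ := P)
        (F := fun j ω => max (φ (X 0 ω) - N j) 0) (f := fun _ => (0:ℝ)) (fun ω => φ (X 0 ω))
        (fun j => (iE j).aestronglyMeasurable) hint
        (fun j => Eventually.of_forall fun ω => by
          rw [Real.norm_eq_abs, abs_of_nonneg (le_max_right _ _)]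
          exact max_le (by linarith [hNpos j]) (by linarith [hφ1 (X 0 ω)]))
        (Eventually.of_forall fun ω => by
          have h1 : ∀ᶠ j in atTop, φ (X 0 ω) ≤ N j :=
            ((tendsto_natCast_atTop_atTop (R := ℝ)).comp hNtop).eventually_ge_atTop _
          refine tendsto_const_nhds.congr' ?_
          filter_upwards [h1] with j hj
          rw [max_eq_right (by linarith)])
      simpa using this
    have hI0 : Tendsto I atTop (nhds 0) := hsum.tendsto_atTop_zero
    refine tendsto_of_tendsto_of_tendsto_of_le_of_le tendsto_const_nhds (by simpa using hE.add hI0)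
      (fun j => ?_) (fun j => ?_)
    · exact sub_nonneg.mpr (integral_mono (iT j 0) hintf fun ω => min_le_left _ _)
    · simp only [hd]
      rw [← integral_sub hintf (iT j 0)]
      refine le_trans ?_ (add_le_add le_rfl (hR j))
      rw [← integral_add (iE j) (iR0 j 0)]
      refine integral_mono (hintf.sub (iT j 0)) ((iE j).add (iR0 j 0)) fun ω => ?_
      have a1 := hfφ (X 0 ω)
      have a2 := hMn j
      dsimp only
      rcases le_total (φ (X 0 ω)) (N j) with h | h
      · rw [min_eq_left h]
        have b1 := le_max_right (φ (X 0 ω) - N j) 0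
        have b2 := le_max_left (φ (X 0 ω) - M j) 0
        have b3 := le_max_right (φ (X 0 ω) - M j) 0
        rcases min_choice (f (X 0 ω)) (M j) with e | e <;> rw [e] <;> linarith
      · rw [min_eq_right h]
        have b1 := le_max_left (φ (X 0 ω) - N j) 0
        have b2 := le_max_left ((N j : ℝ) - M j) 0
        rcases min_choice (f (X 0 ω)) (M j) with e | e <;> rw [e] <;> linarith
  filter_upwards [aH, aR, aB] with ω h1 h2 h3
  have hT0 : Tendsto (fun j => T j ω) atTop (nhds 0) := tendsto_of_hub h1
  set D : ℕ → ℝ := fun j => (∑ i ∈ Finset.range (N j), (f (X i ω) - min (f (X i ω)) (M j))) / N j with hD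
  have hD0 : Tendsto D atTop (nhds 0) := by
    refine tendsto_of_tendsto_of_tendsto_of_le_of_le' tendsto_const_nhds h2
      (Eventually.of_forall fun j => div_nonneg (Finset.sum_nonneg fun i _ => sub_nonneg.mpr (min_le_left _ _))
        (hNpos j).le) ?_
    filter_upwards [h3.eventually (gt_mem_nhds one_pos)] with j hj
    simp only [hD, hRdef]
    refine div_le_div_of_nonneg_right (Finset.sum_le_sum fun i hi => ?_) (hNpos j).le
    have hle : φ (X i ω) ≤ N j := by
      by_contra hcon
      push Not at hcon
      have := Finset.single_le_sum (f := fun i => if (N j : ℝ) < φ (X i ω) then (1:ℝ) else 0)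
        (fun i _ => by split_ifs <;> simp) hi
      simp only [if_pos hcon] at this
      linarith
    rw [min_eq_left hle]
    have a1 := hfφ (X i ω)
    have b2 := le_max_left (φ (X i ω) - M j) 0
    have b3 := le_max_right (φ (X i ω) - M j) 0
    rcases min_choice (f (X i ω)) (M j) with e | e <;> rw [e] <;> linarith
  have hfin : ∀ j, (∑ i ∈ Finset.range (N j), f (X i ω)) / N j
      = ∫ ω, f (X 0 ω) ∂P + (T j ω + D j - d j) := by
    intro j
    have hne := (hNpos j).ne'
    simp only [hT, hD, hd, Finset.sum_sub_distrib, Finset.sum_const, Finset.card_range, nsmul_eq_mul]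
    field_simp
    ring
  have hl : Tendsto (fun j => ∫ ω, f (X 0 ω) ∂P + (T j ω + D j - d j)) atTop
      (nhds (∫ ω, f (X 0 ω) ∂P)) := by
    simpa using ((hT0.add hD0).sub hdlim).const_add (∫ ω, f (X 0 ω) ∂P)
  exact hl.congr fun j => (hfin j).symm

lemma slln (P : Measure Ω) [IsProbabilityMeasure P] (X : ℕ → Ω → ℝ)
    (hmeas : ∀ i, Measurable (X i)) (hident : ∀ i, Measure.map (X i) P = Measure.map (X 0) P)
    (hmix : Tendsto (alphaCoef P X) atTop (nhds 0))
    (φ : ℝ → ℝ) (hφ : Measurable φ) (hφ1 : ∀ x, 1 ≤ φ x)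
    (hint : Integrable (fun ω => φ (X 0 ω)) P)
    (hcond : IntegrableOn
      (fun s => Real.log (1 + rcInv (alphaExt (alphaCoef P X)) (s / 2)) *
        rcInv (fun x => 1 - distFun P (fun ω => φ (X 0 ω)) x) s)
      (Set.Ioo (0 : ℝ) 1))
    (f : ℝ → ℝ) (hf : Measurable f) (hf0 : ∀ x, 0 ≤ f x) (hfφ : ∀ x, f x ≤ φ x) :
    ∀ᵐ ω ∂P, Tendsto (fun n : ℕ => (∑ i ∈ Finset.range n, f (X i ω)) / n) atTop
      (nhds (∫ ω, f (X 0 ω) ∂P)) := by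
  have hck : ∀ k : ℕ, (1:ℝ) < 1 + 1 / ((k:ℝ) + 1) := fun k => by
    have : (0:ℝ) < 1 / ((k:ℝ) + 1) := Nat.one_div_pos_of_nat
    linarith
  have h := fun k : ℕ => slln_sub P X hmeas hident hmix φ hφ hφ1 hint hcond f hf hf0 hfφ
    (1 + 1 / ((k:ℝ) + 1)) (hck k)
  filter_upwards [ae_all_iff.mpr h] with ω hω
  refine tendsto_div_of_monotone_of_tendsto_div_floor_pow
    (fun n => ∑ i ∈ Finset.range n, f (X i ω)) _ ?_ (fun k : ℕ => 1 + 1 / ((k:ℝ) + 1)) hck ?_ hω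
  · exact monotone_nat_of_le_succ fun n => by
      rw [Finset.sum_range_succ]; linarith [hf0 (X n ω)]
  · simpa using (tendsto_one_div_add_atTop_nhds_zero_nat (𝕜 := ℝ)).const_add 1

end SLLN

section KBound

lemma cont_of_ptLip (G L : ℝ → ℝ) (ha : ∀ x ∈ Ioo (0 : ℝ) 1, ∃ δ > 0, ∀ y ∈ Ioo (0 : ℝ) 1,
      |y - x| ≤ δ → |G y - G x| ≤ L x * |y - x|) (x : ℝ) (hx : x ∈ Ioo (0:ℝ) 1) : ContinuousAt G x := by
  obtain ⟨δ, hδ, h⟩ := ha x hx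
  rw [ContinuousAt, tendsto_iff_norm_sub_tendsto_zero]
  have h0 : Tendsto (fun y => L x * |y - x|) (nhds x) (nhds 0) := by
    have : Continuous fun y => L x * |y - x| := by fun_prop
    simpa using this.tendsto x
  refine tendsto_of_tendsto_of_tendsto_of_le_of_le' tendsto_const_nhds h0
    (Eventually.of_forall fun _ => norm_nonneg _) ?_
  filter_upwards [isOpen_Ioo.mem_nhds hx, Metric.closedBall_mem_nhds x hδ] with y hy hy2
  exact h y hy (by simpa [Real.dist_eq] using hy2)

lemma kbound (G L : ℝ → ℝ) (hmono : Monotone G) (h1 : ∀ x, G x ≤ 1)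
    (ha : ∀ x ∈ Ioo (0 : ℝ) 1, ∃ δ > 0, ∀ y ∈ Ioo (0 : ℝ) 1,
      |y - x| ≤ δ → |G y - G x| ≤ L x * |y - x|)
    (C' β : ℝ) (hC' : 0 < C') (hβ0 : 0 ≤ β) (hβ1 : β < 1)
    (hL : ∀ x ∈ Ioo (0 : ℝ) 1, L x ≤ C' * x ^ (-β) * (1 - x) ^ (-β))
    (hsmall : ∀ ε > 0, ∃ x ∈ Ioo (0:ℝ) 1, G x < ε) :
    ∃ D : ℝ, 0 ≤ D ∧ ∀ y ∈ Icc (0:ℝ) 1, G y ≤ D * y ^ (1 - β) := by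
  have hb : 0 < 1 - β := by linarith
  set E := 2 * C' / (1 - β) with hE
  have hE0 : 0 < E := by positivity
  have main : ∀ x0 ∈ Ioo (0:ℝ) 1, ∀ y, x0 ≤ y → y ≤ 1 / 2 → G y ≤ G x0 + E * y ^ (1 - β) := by
    intro x0 hx0 y hxy hy
    have hsub : ∀ x ∈ Icc x0 y, x ∈ Ioo (0:ℝ) 1 := fun x hx => ⟨hx0.1.trans_le hx.1, by linarith [hx.2]⟩
    have hd : ∀ x, 0 < x → HasDerivAt (fun x => G x0 + E * x ^ (1 - β)) (2 * C' * x ^ (-β)) x := by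
      intro x hx
      have := ((Real.hasDerivAt_rpow_const (p := 1 - β) (Or.inl hx.ne')).const_mul E).const_add (G x0)
      have e : 2 * C' * x ^ (-β) = E * ((1 - β) * x ^ (1 - β - 1)) := by
        rw [hE, show 1 - β - 1 = -β by ring]
        field_simp
      rw [e]; exact this
    refine image_le_of_liminf_slope_right_le_deriv_boundary (f := G) (a := x0) (b := y)
      (B := fun x => G x0 + E * x ^ (1 - β)) (B' := fun x => 2 * C' * x ^ (-β)) ?_ ?_ ?_ ?_ ?_ ⟨hxy, le_rfl⟩
    · exact fun x hx => (cont_of_ptLip G L ha x (hsub x hx)).continuousWithinAt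
    · have : 0 ≤ x0 ^ (1 - β) := Real.rpow_nonneg hx0.1.le _
      nlinarith
    · exact fun x hx => (hd x (hsub x hx).1).continuousAt.continuousWithinAt
    · exact fun x hx => (hd x (hsub x ⟨hx.1, hx.2.le⟩).1).hasDerivWithinAt
    · intro x hx r hr
      have hx' := hsub x ⟨hx.1, hx.2.le⟩
      obtain ⟨δ, hδ, h⟩ := ha x hx'
      have hLx : L x ≤ 2 * C' * x ^ (-β) := by
        refine (hL x hx').trans ?_
        have h3 : (1 - x) ^ (-β) ≤ 2 := by
          calc (1 - x) ^ (-β) ≤ (1 / 2 : ℝ) ^ (-β) :=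
                Real.rpow_le_rpow_of_nonpos (by norm_num) (by linarith [hx.2]) (by linarith)
            _ = 2 ^ β := by
                rw [one_div, Real.inv_rpow (by norm_num), Real.rpow_neg (by norm_num), inv_inv]
            _ ≤ 2 ^ (1:ℝ) := Real.rpow_le_rpow_of_exponent_le (by norm_num) hβ1.le
            _ = 2 := Real.rpow_one 2
        have h4 : 0 ≤ C' * x ^ (-β) := mul_nonneg hC'.le (Real.rpow_nonneg hx'.1.le _)
        nlinarith
      apply Eventually.frequently
      have n1 : ∀ᶠ z in nhdsWithin x (Ioi x), z ∈ Ioo (0:ℝ) 1 :=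
        mem_nhdsWithin_of_mem_nhds (isOpen_Ioo.mem_nhds hx')
      have n2 : ∀ᶠ z in nhdsWithin x (Ioi x), z ∈ Metric.closedBall x δ :=
        mem_nhdsWithin_of_mem_nhds (Metric.closedBall_mem_nhds x hδ)
      filter_upwards [n1, n2, self_mem_nhdsWithin] with z hz1 hz2 hz3
      have hz3 : x < z := hz3
      have := h z hz1 (by simpa [Real.dist_eq] using hz2)
      rw [abs_of_pos (sub_pos.mpr hz3)] at this
      rw [slope_def_field, div_lt_iff₀ (sub_pos.mpr hz3)]
      have k1 := le_abs_self (G z - G x)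
      have k2 : 0 < z - x := sub_pos.mpr hz3
      nlinarith
  refine ⟨E + 2, by linarith, fun y hy => ?_⟩
  have hyp : 0 ≤ y ^ (1 - β) := Real.rpow_nonneg hy.1 _
  rcases le_or_gt y (1 / 2) with h | h
  · refine le_of_forall_pos_lt_add fun ε hε => ?_
    obtain ⟨x0, hx0, hs⟩ := hsmall ε hε
    rcases le_total x0 y with h2 | h2
    · have := main x0 hx0 y h2 h
      nlinarith
    · have := hmono h2
      nlinarith
  · have : y ≤ y ^ (1 - β) := by
      calc y = y ^ (1:ℝ) := (Real.rpow_one y).symm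
        _ ≤ y ^ (1 - β) := Real.rpow_le_rpow_of_exponent_ge (by linarith) hy.2 (by linarith)
    nlinarith [h1 y]

end KBound

section Conclusion

lemma side_bound (G : ℝ → ℝ) (D B γ β e p : ℝ) (hD : 0 ≤ D) (hB : 0 ≤ B) (hβ0 : 0 ≤ β) (hβγ : β < γ)
    (hγ1 : γ ≤ 1) (he : e ∈ Icc (0:ℝ) 1) (hp : p ∈ Ioo (0:ℝ) 1)
    (hG : ∀ y ∈ Icc (0:ℝ) 1, G y ≤ D * y ^ (1 - β)) (hep : e ≤ p ^ γ * B) :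
    G e ≤ D * B ^ (1 - β) * p ^ (γ - β) := by
  calc G e ≤ D * e ^ (1 - β) := hG e he
    _ ≤ D * (p ^ γ * B) ^ (1 - β) := by
        gcongr
        · exact he.1
        · linarith
    _ = D * B ^ (1 - β) * p ^ (γ * (1 - β)) := by
        rw [Real.mul_rpow (Real.rpow_nonneg hp.1.le _) hB, ← Real.rpow_mul hp.1.le]; ring
    _ ≤ D * B ^ (1 - β) * p ^ (γ - β) := by
        refine mul_le_mul_of_nonneg_left ?_ (mul_nonneg hD (Real.rpow_nonneg hB _))
        exact Real.rpow_le_rpow_of_exponent_ge hp.1 hp.2.le (by nlinarith)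

lemma empDF_eq {Ω : Type*} (X : ℕ → Ω → ℝ) (n : ℕ) (ω : Ω) (x : ℝ) :
    empDF X n ω x = (∑ i ∈ Finset.range n, (if X i ω ≤ x then (1:ℝ) else 0)) / n := by
  unfold empDF
  rw [← Finset.sum_filter, Finset.sum_const, nsmul_eq_mul, mul_one]

lemma empDF_mono {Ω : Type*} (X : ℕ → Ω → ℝ) (n : ℕ) (ω : Ω) : Monotone (empDF X n ω) := by
  intro x y hxy
  rw [empDF_eq, empDF_eq]
  gcongr with i hi
  split_ifs with h1 h2 h2
  · exact le_rfl
  · exact absurd (h1.trans hxy) h2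
  · norm_num
  · exact le_rfl

lemma empDF_mem {Ω : Type*} (X : ℕ → Ω → ℝ) (n : ℕ) (ω : Ω) (x : ℝ) : empDF X n ω x ∈ Icc (0:ℝ) 1 := by
  unfold empDF
  refine ⟨by positivity, div_le_one_of_le₀ ?_ (Nat.cast_nonneg n)⟩
  have := Finset.card_filter_le (Finset.range n) fun i => X i ω ≤ x
  rw [Finset.card_range] at this
  exact_mod_cast this

lemma one_sub_empDF {Ω : Type*} (X : ℕ → Ω → ℝ) (n : ℕ) (hn : 1 ≤ n) (ω : Ω) (x : ℝ) :
    1 - empDF X n ω x = (∑ i ∈ Finset.range n, (if X i ω ≤ x then (0:ℝ) else 1)) / n := by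
  have hnpos : (0:ℝ) < n := by exact_mod_cast hn
  rw [empDF_eq, eq_div_iff hnpos.ne', sub_mul, div_mul_cancel₀ _ hnpos.ne', one_mul, sub_eq_iff_eq_add,
    ← Finset.sum_add_distrib]
  have : ∀ i ∈ Finset.range n, ((if X i ω ≤ x then (0:ℝ) else 1) + (if X i ω ≤ x then (1:ℝ) else 0)) = 1 := by
    intro i _; split_ifs <;> simp
  rw [Finset.sum_congr rfl this]; simp

lemma phiW_ge_one (γ : ℝ) (hγ : 0 ≤ γ) (F : ℝ → ℝ) (hF01 : ∀ x, F x ∈ Ioo (0 : ℝ) 1) (x : ℝ) :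
    1 ≤ phiW γ F x := by
  unfold phiW
  have h := hF01 x
  split_ifs
  · exact Real.one_le_rpow_of_pos_of_le_one_of_nonpos h.1 h.2.le (by linarith)
  · exact Real.one_le_rpow_of_pos_of_le_one_of_nonpos (by linarith [h.2]) (by linarith [h.1]) (by linarith)

lemma phiW_meas (γ : ℝ) (F : ℝ → ℝ) (hF : Monotone F) : Measurable (phiW γ F) := by
  unfold phiW
  exact Measurable.ite (measurableSet_lt measurable_id measurable_const)
    (hF.measurable.pow_const _) ((hF.measurable.const_sub 1).pow_const _)

lemma left_bound {Ω : Type*} (X : ℕ → Ω → ℝ) (n : ℕ) (ω : Ω) (γ : ℝ) (hγ : 0 ≤ γ) (F : ℝ → ℝ)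
    (hF : Monotone F) (hF01 : ∀ x, F x ∈ Ioo (0 : ℝ) 1) (B : ℝ)
    (hB : (∑ i ∈ Finset.range n, phiW γ F (X i ω)) / n ≤ B) (x : ℝ) (hx : x < 0) :
    empDF X n ω x ≤ F x ^ γ * B := by
  rw [empDF_eq]
  have hFx := hF01 x
  refine le_trans ?_ (mul_le_mul_of_nonneg_left hB (Real.rpow_nonneg hFx.1.le γ))
  rw [← mul_div_assoc, Finset.mul_sum]
  gcongr with i hi
  have h1 := phiW_ge_one γ hγ F hF01 (X i ω)
  have h2 : 0 < F x ^ γ := Real.rpow_pos_of_pos hFx.1 γ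
  split_ifs with h
  · have h3 : F x ^ (-γ) ≤ phiW γ F (X i ω) := by
      rw [phiW, if_pos (h.trans_lt hx)]
      exact Real.rpow_le_rpow_of_nonpos (hF01 _).1 (hF h) (by linarith)
    have h4 : F x ^ γ * F x ^ (-γ) = 1 := by
      rw [← Real.rpow_add hFx.1]; simp
    rw [← h4]
    exact mul_le_mul_of_nonneg_left h3 h2.le
  · nlinarith

lemma right_bound {Ω : Type*} (X : ℕ → Ω → ℝ) (n : ℕ) (hn : 1 ≤ n) (ω : Ω) (γ : ℝ) (hγ : 0 ≤ γ) (F : ℝ → ℝ)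
    (hF : Monotone F) (hF01 : ∀ x, F x ∈ Ioo (0 : ℝ) 1) (B : ℝ)
    (hB : (∑ i ∈ Finset.range n, phiW γ F (X i ω)) / n ≤ B) (x : ℝ) (hx : 0 < x) :
    1 - empDF X n ω x ≤ (1 - F x) ^ γ * B := by
  rw [one_sub_empDF X n hn]
  have hFx := hF01 x
  have hFx' : 0 < 1 - F x := by linarith [hFx.2]
  refine le_trans ?_ (mul_le_mul_of_nonneg_left hB (Real.rpow_nonneg hFx'.le γ))
  rw [← mul_div_assoc, Finset.mul_sum]
  gcongr with i hi
  have h1 := phiW_ge_one γ hγ F hF01 (X i ω)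
  have h2 : 0 < (1 - F x) ^ γ := Real.rpow_pos_of_pos hFx' γ
  split_ifs with h
  · nlinarith
  · push Not at h
    have h3 : (1 - F x) ^ (-γ) ≤ phiW γ F (X i ω) := by
      rw [phiW, if_neg (by linarith)]
      exact Real.rpow_le_rpow_of_nonpos (by linarith [(hF01 (X i ω)).2]) (by linarith [hF h.le]) (by linarith)
    have h4 : (1 - F x) ^ γ * (1 - F x) ^ (-γ) = 1 := by
      rw [← Real.rpow_add hFx']; simp
    exact h4.symm.le.trans (mul_le_mul_of_nonneg_left h3 h2.le)

lemma tendsto_emp_of_rat {Ω : Type*} (X : ℕ → Ω → ℝ) (ω : Ω) (F : ℝ → ℝ)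
    (h : ∀ r : ℚ, Tendsto (fun n => empDF X n ω r) atTop (nhds (F r))) (x : ℝ) (hx : ContinuousAt F x) :
    Tendsto (fun n => empDF X n ω x) atTop (nhds (F x)) := by
  refine tendsto_order.2 ⟨fun a ha => ?_, fun a ha => ?_⟩
  · obtain ⟨δ, hδ, hb⟩ := Metric.eventually_nhds_iff.mp (hx.eventually (lt_mem_nhds ha))
    obtain ⟨r, hr1, hr2⟩ := exists_rat_btwn (show x - δ < x by linarith)
    have := hb (y := r) (by rw [Real.dist_eq, abs_lt]; constructor <;> linarith)
    filter_upwards [(h r).eventually (lt_mem_nhds this)] with n hn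
    exact hn.trans_le (empDF_mono X n ω hr2.le)
  · obtain ⟨δ, hδ, hb⟩ := Metric.eventually_nhds_iff.mp (hx.eventually (gt_mem_nhds ha))
    obtain ⟨r, hr1, hr2⟩ := exists_rat_btwn (show x < x + δ by linarith)
    have := hb (y := r) (by rw [Real.dist_eq, abs_lt]; constructor <;> linarith)
    filter_upwards [(h r).eventually (gt_mem_nhds this)] with n hn
    exact (empDF_mono X n ω hr1.le).trans_lt hn

end Conclusion


/-- **Ordinary SLLN for L-statistics of α-mixing data**
(Theorem 3 (ii) of the paper). -/
theorem slln_l_statistic_alpha_mixing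
    {Ω : Type*} [MeasurableSpace Ω] (P : Measure Ω) [IsProbabilityMeasure P]
    (X : ℕ → Ω → ℝ) (hmeas : ∀ i, Measurable (X i))
    (hident : ∀ i, Measure.map (X i) P = Measure.map (X 0) P)
    (hmix : Tendsto (alphaCoef P X) atTop (nhds 0))
    (K : ℝ → ℝ) (hK : IsDFon01 K)
    (F : ℝ → ℝ) (hFdist : ∀ x, F x = distFun P (X 0) x)
    (hF01 : ∀ x, F x ∈ Set.Ioo (0 : ℝ) 1) (hFK : MemFK K F)
    (β' γ : ℝ) (hβ'0 : 0 ≤ β') (hβ'γ : β' < γ) (hγ1 : γ ≤ 1)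
    (C' : ℝ) (hC' : 0 < C') (L : ℝ → ℝ)
    (hLpos : ∀ x ∈ Set.Ioo (0 : ℝ) 1, 0 < L x)
    (ha : ∀ x ∈ Set.Ioo (0 : ℝ) 1, ∃ δ > 0, ∀ y ∈ Set.Ioo (0 : ℝ) 1,
      |y - x| ≤ δ → |K y - K x| ≤ L x * |y - x|)
    (hL : ∀ x ∈ Set.Ioo (0 : ℝ) 1, L x ≤ C' * x ^ (-β') * (1 - x) ^ (-β'))
    (hb : IntegrableOn (fun x => F x ^ (γ - β')) (Set.Iic (0 : ℝ)) ∧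
      IntegrableOn (fun x => (1 - F x) ^ (γ - β')) (Set.Ioi (0 : ℝ)))
    (hint : Integrable (fun ω => phiW γ F (X 0 ω)) P)
    (hcond : IntegrableOn
      (fun s => Real.log (1 + rcInv (alphaExt (alphaCoef P X)) (s / 2)) *
        rcInv (fun x => 1 - distFun P (fun ω => phiW γ F (X 0 ω)) x) s)
      (Set.Ioo (0 : ℝ) 1)) :
    ∀ᵐ ω ∂P, Tendsto
      (fun n : ℕ => |LFunc K (empDF X n ω) - LFunc K F|)
      atTop (nhds 0) := by
  have hγ0 : 0 ≤ γ := by linarith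
  obtain ⟨μ, hμ, -, hKμ⟩ := hK
  have hKmono : Monotone K := fun x y hxy => by
    rw [hKμ, hKμ]
    exact ENNReal.toReal_mono (measure_ne_top _ _) (measure_mono (Iic_subset_Iic.mpr hxy))
  have hK0 : ∀ x, 0 ≤ K x := fun x => by rw [hKμ]; exact ENNReal.toReal_nonneg
  have hK1 : ∀ x, K x ≤ 1 := fun x => by rw [hKμ]; exact measureReal_le_one
  have hFmono : Monotone F := fun x y hxy => by
    rw [hFdist, hFdist]
    exact ENNReal.toReal_mono (measure_ne_top _ _) (measure_mono fun ω hω => le_trans hω hxy)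
  -- bounds on K near the end points
  have inf1 : ∀ ε : ℝ, 0 < ε → ¬ IntegrableOn (fun _ : ℝ => ε) (Iic (0:ℝ)) := fun ε hε h => by
    rw [integrableOn_const_iff] at h
    simp [hε.ne'] at h
  have inf2 : ∀ ε : ℝ, 0 < ε → ¬ IntegrableOn (fun _ : ℝ => ε) (Ioi (0:ℝ)) := fun ε hε h => by
    rw [integrableOn_const_iff] at h
    simp [hε.ne'] at h
  obtain ⟨D1, hD1, hKD1⟩ := kbound K L hKmono hK1 ha C' β' hC' hβ'0 (by linarith) hL (by
    intro ε hε
    by_contra hcon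
    push Not at hcon
    refine inf1 ε hε (Integrable.mono' hFK.1 aestronglyMeasurable_const (Eventually.of_forall fun x => ?_))
    rw [Real.norm_eq_abs, abs_of_pos hε]
    exact hcon _ (hF01 x))
  set K2 : ℝ → ℝ := fun t => 1 - K (1 - t) with hK2
  have hflip : ∀ x ∈ Ioo (0:ℝ) 1, 1 - x ∈ Ioo (0:ℝ) 1 := fun x hx => ⟨by linarith [hx.2], by linarith [hx.1]⟩
  obtain ⟨D2, hD2, hKD2⟩ := kbound K2 (fun x => L (1 - x))
    (fun x y hxy => by
      have := hKmono (show 1 - y ≤ 1 - x by linarith)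
      simp only [hK2]; linarith)
    (fun x => by simp only [hK2]; linarith [hK0 (1 - x)])
    (fun x hx => by
      obtain ⟨δ, hδ, h⟩ := ha (1 - x) (hflip x hx)
      refine ⟨δ, hδ, fun y hy hyx => ?_⟩
      have e : |1 - y - (1 - x)| = |y - x| := by rw [abs_sub_comm y x]; congr 1; ring
      have := h (1 - y) (hflip y hy) (by rw [e]; exact hyx)
      rw [e] at this
      have e2 : |K2 y - K2 x| = |K (1 - y) - K (1 - x)| := by
        rw [abs_sub_comm (K (1 - y))]; simp only [hK2]; congr 1; ring
      rw [e2]; exact this)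
    C' β' hC' hβ'0 (by linarith)
    (fun x hx => by
      have := hL (1 - x) (hflip x hx)
      rw [sub_sub_cancel] at this
      refine this.trans (le_of_eq (by ring)))
    (by
      intro ε hε
      by_contra hcon
      push Not at hcon
      refine inf2 ε hε (Integrable.mono' hFK.2 aestronglyMeasurable_const (Eventually.of_forall fun x => ?_))
      rw [Real.norm_eq_abs, abs_of_pos hε]
      have := hcon _ (hflip _ (hF01 x))
      simpa only [hK2, sub_sub_cancel] using this)
  -- laws of large numbers
  have hφm := phiW_meas γ F hFmono
  have hφ1 := phiW_ge_one γ hγ0 F hF01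
  have S1 := slln P X hmeas hident hmix (phiW γ F) hφm hφ1 hint hcond (phiW γ F) hφm
    (fun x => by linarith [hφ1 x]) (fun x => le_rfl)
  have S2 : ∀ r : ℚ, ∀ᵐ ω ∂P, Tendsto (fun n => empDF X n ω r) atTop (nhds (F r)) := by
    intro r
    have hms : MeasurableSet {ω | X 0 ω ≤ (r:ℝ)} := measurableSet_le (hmeas 0) measurable_const
    have h := slln P X hmeas hident hmix (phiW γ F) hφm hφ1 hint hcond
      (fun x => if x ≤ (r:ℝ) then (1:ℝ) else 0)
      (Measurable.ite (measurableSet_le measurable_id measurable_const) measurable_const measurable_const)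
      (fun x => by split_ifs <;> simp) (fun x => by split_ifs <;> linarith [hφ1 x])
    have e : ∫ ω, (if X 0 ω ≤ (r:ℝ) then (1:ℝ) else 0) ∂P = F r := by
      have : ∀ ω, (if X 0 ω ≤ (r:ℝ) then (1:ℝ) else 0)
          = {ω | X 0 ω ≤ (r:ℝ)}.indicator (fun _ => (1:ℝ)) ω := by
        intro ω; simp [Set.indicator]
      simp_rw [this]
      rw [integral_indicator hms, hFdist]
      simp [distFun, Measure.real]
    rw [e] at h
    filter_upwards [h] with ω hω
    simpa only [empDF_eq] using hω
  filter_upwards [S1, ae_all_iff.mpr S2] with ω h1 h2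
  obtain ⟨B, hB⟩ := h1.bddAbove_range
  have hB' : ∀ n : ℕ, (∑ i ∈ Finset.range n, phiW γ F (X i ω)) / n ≤ B := fun n => hB ⟨n, rfl⟩
  have hB0 : 0 ≤ B := by simpa using hB' 0
  have hcont : ∀ᵐ x : ℝ, ContinuousAt F x := by
    have := hFmono.countable_not_continuousAt.ae_notMem (volume : Measure ℝ)
    filter_upwards [this] with x hx
    simpa using hx
  have hpt : ∀ᵐ x : ℝ, Tendsto (fun n => K (empDF X n ω x)) atTop (nhds (K (F x))) := by
    filter_upwards [hcont] with x hx
    exact (cont_of_ptLip K L ha (F x) (hF01 x)).tendsto.comp (tendsto_emp_of_rat X ω F h2 x hx)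
  have hm : ∀ n, Measurable fun x => K (empDF X n ω x) := fun n =>
    (hKmono.comp (empDF_mono X n ω)).measurable
  have L1 : Tendsto (fun n => ∫ x in Iic (0:ℝ), K (empDF X n ω x)) atTop
      (nhds (∫ x in Iic (0:ℝ), K (F x))) := by
    refine tendsto_integral_filter_of_dominated_convergence
      (fun x => D1 * B ^ (1 - β') * F x ^ (γ - β'))
      (Eventually.of_forall fun n => (hm n).aestronglyMeasurable) ?_ (hb.1.const_mul _)
      (ae_restrict_of_ae hpt)
    refine Eventually.of_forall fun n => ?_
    filter_upwards [ae_restrict_mem measurableSet_Iic,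
      ae_restrict_of_ae (Measure.ae_ne volume (0:ℝ))] with x hx hx0
    rw [Real.norm_eq_abs, abs_of_nonneg (hK0 _)]
    exact side_bound K D1 B γ β' _ (F x) hD1 hB0 hβ'0 hβ'γ hγ1 (empDF_mem X n ω x) (hF01 x) hKD1
      (left_bound X n ω γ hγ0 F hFmono hF01 B (hB' n) x (lt_of_le_of_ne hx hx0))
  have L2 : Tendsto (fun n => ∫ x in Ioi (0:ℝ), (1 - K (empDF X n ω x))) atTop
      (nhds (∫ x in Ioi (0:ℝ), (1 - K (F x)))) := by
    refine tendsto_integral_filter_of_dominated_convergence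
      (fun x => D2 * B ^ (1 - β') * (1 - F x) ^ (γ - β'))
      (Eventually.of_forall fun n => ((hm n).const_sub 1).aestronglyMeasurable) ?_ (hb.2.const_mul _)
      (ae_restrict_of_ae (by filter_upwards [hpt] with x hx using hx.const_sub 1))
    filter_upwards [eventually_ge_atTop 1] with n hn
    filter_upwards [ae_restrict_mem measurableSet_Ioi] with x hx
    rw [Real.norm_eq_abs, abs_of_nonneg (by linarith [hK1 (empDF X n ω x)])]
    have he := empDF_mem X n ω x
    have := side_bound K2 D2 B γ β' (1 - empDF X n ω x) (1 - F x) hD2 hB0 hβ'0 hβ'γ hγ1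
      ⟨by linarith [he.2], by linarith [he.1]⟩ (hflip _ (hF01 x)) hKD2
      (right_bound X n hn ω γ hγ0 F hFmono hF01 B (hB' n) x hx)
    simpa only [hK2, sub_sub_cancel] using this
  have hfin := ((L2.sub L1).sub_const (LFunc K F)).abs
  simpa [LFunc] using hfin
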